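/- arXiv:2302.09623 — 2 statements merged into one kernel-verified Lean document; each statement's English description precedes it below -/
import Mathlib

section
/- Let p ∈ (1, ∞), let F : 𝕋 → ℂ be absolutely continuous with Ḟ ∈ L^p(𝕋), and let f = P[F] be its Poisson integral. Then both f_z and the conjugate of f_z̄ belong to the analytic Hardy space H^p(𝔻), and there exists a constant A_p depending only on p such that max(‖f_z‖_p, ‖conj(f_z̄)‖_p) ≤ A_p ‖Ḟ‖_{L^p(𝕋)}. -/
open MeasureTheory Complex Metric Set Filter
open scoped Real Topology ENNReal

noncomputable section

/-- The Poisson kernel `P(z) = (1-|z|^2)/|1-z|^2`. -/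
def poissonKer (z : ℂ) : ℝ := (1 - ‖z‖ ^ 2) / ‖1 - z‖ ^ 2

/-- The Poisson integral of a boundary function `F` defined on the unit circle. -/
def poissonInt (F : ℂ → ℂ) (z : ℂ) : ℂ :=
  (1 / (2 * π)) * ∫ t in (0:ℝ)..(2 * π),
    (poissonKer (z * Complex.exp (-(t : ℂ) * Complex.I)) : ℂ) *
      F (Complex.exp ((t : ℂ) * Complex.I))

/-- The Poisson integral of a (2π-periodic) function of the angular variable. -/
def poissonIntR (φ : ℝ → ℂ) (z : ℂ) : ℂ :=
  (1 / (2 * π)) * ∫ t in (0:ℝ)..(2 * π),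
    (poissonKer (z * Complex.exp (-(t : ℂ) * Complex.I)) : ℂ) * φ t

/-- The conjugate Poisson kernel `P̃(z) = Im((1+z)/(1-z))`. -/
def conjPoissonKer (z : ℂ) : ℝ := ((1 + z) / (1 - z)).im

/-- The conjugate Poisson integral of a function of the angular variable. -/
def conjPoissonIntR (φ : ℝ → ℂ) (z : ℂ) : ℂ :=
  (1 / (2 * π)) * ∫ t in (0:ℝ)..(2 * π),
    (conjPoissonKer (z * Complex.exp (-(t : ℂ) * Complex.I)) : ℂ) * φ t

/-- Wirtinger derivative `f_z = (1/2)(∂ₓ - i ∂_y) f`. -/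
def wdz (f : ℂ → ℂ) (z : ℂ) : ℂ :=
  (1 / 2) * (fderiv ℝ f z 1 - Complex.I * fderiv ℝ f z Complex.I)

/-- Wirtinger derivative `f_z̄ = (1/2)(∂ₓ + i ∂_y) f`. -/
def wdzb (f : ℂ → ℂ) (z : ℂ) : ℂ :=
  (1 / 2) * (fderiv ℝ f z 1 + Complex.I * fderiv ℝ f z Complex.I)

/-- The angular derivative `f_θ(z) = i (z f_z(z) - z̄ f_z̄(z))`. -/
def fTheta (f : ℂ → ℂ) (z : ℂ) : ℂ :=
  Complex.I * (z * wdz f z - (starRingEnd ℂ) z * wdzb f z)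

/-- The radial derivative multiplied by `r`: `r f_r(z) = z f_z(z) + z̄ f_z̄(z)`. -/
def rFr (f : ℂ → ℂ) (z : ℂ) : ℂ :=
  z * wdz f z + (starRingEnd ℂ) z * wdzb f z

/-- `F : 𝕋 → ℂ` is absolutely continuous with angular derivative `Ḟ = Fd`,
i.e. `t ↦ F(e^{it})` is an indefinite integral of the (locally integrable,
2π-periodic) function `Fd`. -/
def IsACDeriv (F : ℂ → ℂ) (Fd : ℝ → ℂ) : Prop :=
  (∀ a b : ℝ, IntervalIntegrable Fd MeasureTheory.volume a b) ∧
  Function.Periodic Fd (2 * π) ∧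
  ∀ t : ℝ, F (Complex.exp ((t : ℂ) * Complex.I)) = F 1 + ∫ s in (0:ℝ)..t, Fd s

/-- membership in `L^p(𝕋)`, identifying `𝕋` with `[0, 2π)`. -/
def MemLpT (p : ℝ≥0∞) (φ : ℝ → ℂ) : Prop :=
  MeasureTheory.MemLp φ p (MeasureTheory.volume.restrict (Ioc (0:ℝ) (2 * π)))

/-- The integral mean `M_p(r, g)`. -/
def Mp (p : ℝ) (g : ℂ → ℂ) (r : ℝ) : ℝ :=
  ((1 / (2 * π)) * ∫ θ in (0:ℝ)..(2 * π),
      ‖g ((r : ℂ) * Complex.exp ((θ : ℂ) * Complex.I))‖ ^ p) ^ (1 / p)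

/-- The `L^p(𝕋)` norm `((1/2π) ∫ |φ|^p)^{1/p}`. -/
def lpNormT (p : ℝ) (φ : ℝ → ℂ) : ℝ :=
  ((1 / (2 * π)) * ∫ t in (0:ℝ)..(2 * π), ‖φ t‖ ^ p) ^ (1 / p)

/-- Membership in the analytic Hardy space `H^p(𝔻)` for `p ∈ [1, ∞)`. -/
def MemHp (p : ℝ) (g : ℂ → ℂ) : Prop :=
  DifferentiableOn ℂ g (ball (0:ℂ) 1) ∧ ∃ M : ℝ, ∀ r ∈ Ioo (0:ℝ) 1, Mp p g r ≤ M

/-- Membership in `H^∞(𝔻)`: bounded analytic functions on the unit disk. -/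
def MemHinf (g : ℂ → ℂ) : Prop :=
  DifferentiableOn ℂ g (ball (0:ℂ) 1) ∧ ∃ M : ℝ, ∀ z ∈ ball (0:ℂ) 1, ‖g z‖ ≤ M

/-- Harmonicity on the unit disk: `f` is C² with vanishing Laplacian. -/
def HarmonicOnD (f : ℂ → ℂ) : Prop :=
  ContDiffOn ℝ 2 f (ball (0:ℂ) 1) ∧
  ∀ z ∈ ball (0:ℂ) 1,
    fderiv ℝ (fun w => fderiv ℝ f w 1) z 1
      + fderiv ℝ (fun w => fderiv ℝ f w Complex.I) z Complex.I = 0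

/-- Membership in the harmonic Hardy space `h^p(𝔻)` for `p ∈ [1, ∞)`. -/
def Memhp (p : ℝ) (g : ℂ → ℂ) : Prop :=
  HarmonicOnD g ∧ ∃ M : ℝ, ∀ r ∈ Ioo (0:ℝ) 1, Mp p g r ≤ M

/-- Membership in `h^∞(𝔻)`: bounded harmonic functions on the unit disk. -/
def Memhinf (g : ℂ → ℂ) : Prop :=
  HarmonicOnD g ∧ ∃ M : ℝ, ∀ z ∈ ball (0:ℂ) 1, ‖g z‖ ≤ M

/-- `L` is the value of the principal-value Hilbert transform
`(1/2π) p.v. ∫ φ(t)/tan((θ-t)/2) dt` of (the 2π-periodic) `φ` at `θ`. -/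
def IsPVHilbert (φ : ℝ → ℂ) (θ : ℝ) (L : ℂ) : Prop :=
  Filter.Tendsto
    (fun ε : ℝ => (1 / (2 * π)) *
      ∫ t in Ioo (θ - π) (θ + π) \ Ioo (θ - ε) (θ + ε),
        φ t / (Real.tan ((θ - t) / 2) : ℂ))
    (nhdsWithin 0 (Ioi 0)) (nhds L)

abbrev muT : Measure ℝ := volume.restrict (Ioc (0:ℝ) (2 * π))

def eT (t : ℝ) : ℂ := Complex.exp (-(t : ℂ) * Complex.I)

lemma eT_norm (t : ℝ) : ‖eT t‖ = 1 := by
  unfold eT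
  have := Complex.norm_exp_ofReal_mul_I (-t)
  simpa using this

lemma eT_cont : Continuous eT := by unfold eT; fun_prop

lemma eT_conj (t : ℝ) : (starRingEnd ℂ) (eT t) = Complex.exp ((t : ℂ) * Complex.I) := by
  unfold eT
  rw [← Complex.exp_conj]; simp

lemma eT_mul_exp (t : ℝ) : eT t * Complex.exp ((t : ℂ) * Complex.I) = 1 := by
  unfold eT
  rw [← Complex.exp_add]; simp

lemma ker_lower {z : ℂ} {ρ : ℝ} (hz : ‖z‖ ≤ ρ) (t : ℝ) : 1 - ρ ≤ ‖1 - z * eT t‖ := by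
  have h := norm_sub_norm_le (1:ℂ) (z * eT t)
  rw [norm_mul, eT_norm, norm_one] at h
  linarith

lemma ker_ne {z : ℂ} (hz : ‖z‖ < 1) (t : ℝ) : 1 - z * eT t ≠ 0 := by
  have := ker_lower le_rfl (z := z) t
  rw [← norm_pos_iff]; linarith

lemma ker_bound {z : ℂ} {ρ : ℝ} (hρ : ρ < 1) (hz : ‖z‖ ≤ ρ) (t : ℝ) :
    ‖(1 - z * eT t)⁻¹‖ ≤ (1 - ρ)⁻¹ := by
  rw [norm_inv]
  exact inv_anti₀ (by linarith) (ker_lower hz t)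

lemma ker_cont {z : ℂ} (hz : ‖z‖ < 1) : Continuous fun t => (1 - z * eT t)⁻¹ := by
  apply Continuous.inv₀
  · exact continuous_const.sub (continuous_const.mul eT_cont)
  · exact ker_ne hz

def Cz (φ : ℝ → ℂ) (z : ℂ) : ℂ := ∫ t, φ t * (1 - z * eT t)⁻¹ ∂muT

def Dz (φ : ℝ → ℂ) (z : ℂ) : ℂ := ∫ t, φ t * (eT t * ((1 - z * eT t)⁻¹) ^ 2) ∂muT

lemma ker_integrable {φ : ℝ → ℂ} (hφ : Integrable φ muT) {z : ℂ} (hz : ‖z‖ < 1) :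
    Integrable (fun t => φ t * (1 - z * eT t)⁻¹) muT := by
  refine hφ.mul_bdd (c := (1 - ‖z‖)⁻¹) (ker_cont hz).aestronglyMeasurable ?_
  exact Eventually.of_forall fun t => ker_bound hz le_rfl t

lemma Cz_hasDerivAt {φ : ℝ → ℂ} (hφ : Integrable φ muT) {z : ℂ} (hz : ‖z‖ < 1) :
    HasDerivAt (Cz φ) (Dz φ z) z := by
  obtain ⟨ρ, h1, h2⟩ := exists_between hz
  have hs : ball (0:ℂ) ρ ∈ 𝓝 z := isOpen_ball.mem_nhds (by simpa using h1)
  refine (hasDerivAt_integral_of_dominated_loc_of_deriv_le (μ := muT)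
    (F := fun z t => φ t * (1 - z * eT t)⁻¹)
    (F' := fun z t => φ t * (eT t * ((1 - z * eT t)⁻¹) ^ 2))
    (bound := fun t => ‖φ t‖ * ((1 - ρ)⁻¹) ^ 2) hs ?_ (ker_integrable hφ hz) ?_ ?_ ?_ ?_).2
  · filter_upwards [hs] with w hw
    have hw : ‖w‖ < ρ := by simpa using hw
    exact (ker_integrable hφ (hw.trans h2)).aestronglyMeasurable
  · exact hφ.aestronglyMeasurable.mul
      (eT_cont.mul ((ker_cont hz).pow 2)).aestronglyMeasurable
  · refine Eventually.of_forall fun t w hw => ?_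
    have hw : ‖w‖ < ρ := by simpa using hw
    rw [norm_mul, norm_mul, eT_norm, one_mul, norm_pow]
    gcongr
    exact ker_bound h2 hw.le t
  · exact hφ.norm.mul_const _
  · refine Eventually.of_forall fun t w hw => ?_
    have hw : ‖w‖ < 1 := lt_trans (by simpa using hw) h2
    have h := ((((hasDerivAt_id w).mul_const (eT t)).const_sub 1).inv (ker_ne hw t)).const_mul (φ t)
    refine HasDerivAt.congr_deriv h ?_
    have := ker_ne hw t
    simp only [id, one_mul, neg_neg, inv_pow, div_eq_mul_inv]

lemma Cz_differentiableOn {φ : ℝ → ℂ} (hφ : Integrable φ muT) :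
    DifferentiableOn ℂ (Cz φ) (ball 0 1) := fun z hz =>
  (Cz_hasDerivAt hφ (by simpa using hz)).differentiableAt.differentiableWithinAt

lemma poissonKer_eq {w : ℂ} (hw : ‖w‖ < 1) :
    (poissonKer w : ℂ) = (1 - w)⁻¹ + (starRingEnd ℂ) (1 - w)⁻¹ - 1 := by
  have h1 : 1 - w ≠ 0 := by
    intro h
    have : w = 1 := by linear_combination -h
    simp [this] at hw
  have h2 : (starRingEnd ℂ) (1 - w) ≠ 0 := (map_ne_zero _).2 h1
  unfold poissonKer
  push_cast
  rw [← Complex.mul_conj' w, ← Complex.mul_conj' (1 - w), map_inv₀]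
  field_simp
  simp only [map_sub, map_one]
  ring

lemma poissonInt_eq {F : ℂ → ℂ}
    (hF : Integrable (fun t : ℝ => F (Complex.exp ((t : ℂ) * Complex.I))) muT) {z : ℂ} (hz : ‖z‖ < 1) :
    poissonInt F z = (1 / (2 * π)) * (Cz (fun t => F (Complex.exp ((t : ℂ) * Complex.I))) z
      + (starRingEnd ℂ) (Cz (fun t => (starRingEnd ℂ) (F (Complex.exp ((t : ℂ) * Complex.I)))) z)
      - ∫ t, F (Complex.exp ((t : ℂ) * Complex.I)) ∂muT) := by
  unfold poissonInt
  congr 1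
  rw [intervalIntegral.integral_of_le (by positivity)]
  have hF' : Integrable (fun t : ℝ => (starRingEnd ℂ) (F (Complex.exp ((t : ℂ) * Complex.I)))) muT :=
    (Complex.conjCLE.toContinuousLinearMap).integrable_comp hF
  have i1 := ker_integrable hF hz
  have i2 := ker_integrable hF' hz
  have i3 : Integrable (fun t : ℝ => (starRingEnd ℂ) ((starRingEnd ℂ) (F (Complex.exp ((t : ℂ) * Complex.I))) * (1 - z * eT t)⁻¹)) muT := (Complex.conjCLE.toContinuousLinearMap).integrable_comp i2
  simp only [Cz]
  rw [← integral_conj, ← integral_add i1 i3, ← integral_sub (show Integrable (fun t => _ + _) muT from i1.add i3) hF]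
  apply integral_congr_ae
  refine Eventually.of_forall fun t => ?_
  have hw : ‖z * eT t‖ < 1 := by rw [norm_mul, eT_norm, mul_one]; exact hz
  have := poissonKer_eq hw
  simp only [eT] at this
  simp only [eT, this, map_mul, Complex.conj_conj]
  simp
  ring

lemma wd_eq {F : ℂ → ℂ}
    (hF : Integrable (fun t : ℝ => F (Complex.exp ((t : ℂ) * Complex.I))) muT) {z : ℂ} (hz : ‖z‖ < 1) :
    wdz (poissonInt F) z = (1 / (2 * π)) * Dz (fun t => F (Complex.exp ((t : ℂ) * Complex.I))) z ∧
    (starRingEnd ℂ) (wdzb (poissonInt F) z) = (1 / (2 * π)) *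
      Dz (fun t => (starRingEnd ℂ) (F (Complex.exp ((t : ℂ) * Complex.I)))) z := by
  have hF' : Integrable (fun t : ℝ => (starRingEnd ℂ) (F (Complex.exp ((t : ℂ) * Complex.I)))) muT :=
    (Complex.conjCLE.toContinuousLinearMap).integrable_comp hF
  have d1 := (Cz_hasDerivAt hF hz).hasFDerivAt.restrictScalars ℝ
  have d2 := (Cz_hasDerivAt hF' hz).hasFDerivAt.restrictScalars ℝ
  have d3 := Complex.conjCLE.toContinuousLinearMap.hasFDerivAt.comp z d2
  have d4 := ((d1.add d3).sub_const (∫ t, F (Complex.exp ((t : ℂ) * Complex.I)) ∂muT)).const_mul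
    (1 / (2 * π) : ℂ)
  have hev : poissonInt F =ᶠ[𝓝 z] (fun z => (1 / (2 * π)) * (Cz (fun t => F (Complex.exp ((t : ℂ) * Complex.I))) z
      + (starRingEnd ℂ) (Cz (fun t => (starRingEnd ℂ) (F (Complex.exp ((t : ℂ) * Complex.I)))) z)
      - ∫ t, F (Complex.exp ((t : ℂ) * Complex.I)) ∂muT)) := by
    filter_upwards [isOpen_ball.mem_nhds (show z ∈ ball (0:ℂ) 1 by simpa using hz)] with w hw
    exact poissonInt_eq hF (z := w) (by simpa using hw)
  have d5 := (HasFDerivAt.congr_of_eventuallyEq d4 hev).fderiv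
  unfold wdz wdzb
  rw [d5]
  have c2 : (starRingEnd ℂ) 2 = 2 := Complex.conj_ofNat 2
  constructor
  · simp
    ring_nf
    simp
    ring_nf
  · simp [c2]
    ring_nf
    simp
    ring_nf

lemma eT_hasDerivAt (t : ℝ) : HasDerivAt eT (-Complex.I * eT t) t := by
  have h1 : HasDerivAt (fun t : ℝ => (t : ℂ)) 1 t := Complex.ofRealCLM.hasDerivAt
  have h := ((h1.neg).mul_const Complex.I).cexp
  refine HasDerivAt.congr_deriv h ?_
  simp only [eT, Pi.neg_apply]
  ring

lemma h_hasDerivAt {z : ℂ} (hz : ‖z‖ < 1) (t : ℝ) :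
    HasDerivAt (fun t => eT t * (1 - z * eT t)⁻¹)
      (-Complex.I * (eT t * ((1 - z * eT t)⁻¹) ^ 2)) t := by
  have h0 := ker_ne hz t
  have h := (eT_hasDerivAt t).mul ((((eT_hasDerivAt t).const_mul z).const_sub 1).inv h0)
  refine HasDerivAt.congr_deriv h ?_
  simp only [Pi.inv_apply]
  field_simp
  ring

lemma h'_cont {z : ℂ} (hz : ‖z‖ < 1) :
    Continuous (fun t => -Complex.I * (eT t * ((1 - z * eT t)⁻¹) ^ 2)) :=
  continuous_const.mul (eT_cont.mul ((ker_cont hz).pow 2))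

lemma eT_two_pi : eT (2 * π) = 1 := by
  have := Complex.exp_neg (2 * π * Complex.I)
  rw [Complex.exp_two_pi_mul_I] at this
  simp only [eT]
  push_cast
  rw [neg_mul, this, inv_one]

lemma eT_zero : eT 0 = 1 := by simp [eT]

lemma by_parts {Φ Fd : ℝ → ℂ} {c : ℂ} (hFd : Integrable Fd muT)
    (hΦ : ∀ t, Φ t = c + ∫ s in (0:ℝ)..t, Fd s) (h0 : ∫ s, Fd s ∂muT = 0)
    {z : ℂ} (hz : ‖z‖ < 1) :
    Dz Φ z = -Complex.I * Cz (fun t => Fd t * eT t) z := by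
  set h : ℝ → ℂ := fun t => eT t * (1 - z * eT t)⁻¹ with hh
  set h' : ℝ → ℂ := fun t => -Complex.I * (eT t * ((1 - z * eT t)⁻¹) ^ 2) with hh'
  have hc' : Continuous h' := h'_cont hz
  have hpi : (0:ℝ) ≤ 2 * π := by positivity
  have ftc : ∀ a b : ℝ, ∫ t in a..b, h' t = h b - h a := fun a b =>
    intervalIntegral.integral_eq_sub_of_hasDerivAt (fun t _ => h_hasDerivAt hz t)
      (hc'.intervalIntegrable _ _)
  have hi' : Integrable h' muT :=
    (intervalIntegrable_iff_integrableOn_Ioc_of_le hpi).1 (hc'.intervalIntegrable _ _)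
  have hper : h (2 * π) = h 0 := by simp only [hh, eT_two_pi, eT_zero]
  -- double integral
  have key : ∫ t, (∫ s in (0:ℝ)..t, Fd s) * h' t ∂muT = - ∫ s, Fd s * h s ∂muT := by
    have e1 : ∫ t, (∫ s in (0:ℝ)..t, Fd s) * h' t ∂muT
        = ∫ t, ∫ s, (if s ≤ t then Fd s * h' t else 0) ∂muT ∂muT := by
      apply setIntegral_congr_fun measurableSet_Ioc
      intro t ht
      have e : (fun s => if s ≤ t then Fd s * h' t else 0)
          = (Iic t).indicator (fun s => Fd s * h' t) := by
        ext s; simp [indicator]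
      simp only [e]
      rw [integral_indicator measurableSet_Iic, Measure.restrict_restrict measurableSet_Iic,
        intervalIntegral.integral_of_le ht.1.le, integral_mul_const]
      congr 3
      ext s; simp only [mem_inter_iff, mem_Ioc, mem_Iic]
      constructor
      · rintro ⟨a, b⟩; exact ⟨b, a, b.trans ht.2⟩
      · rintro ⟨a, b, _⟩; exact ⟨b, a⟩
    have e2 : ∫ s, ∫ t, (if s ≤ t then Fd s * h' t else 0) ∂muT ∂muT
        = ∫ s, Fd s * (h (2 * π) - h s) ∂muT := by
      apply setIntegral_congr_fun measurableSet_Ioc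
      intro s hs
      have e : (fun t => if s ≤ t then Fd s * h' t else 0)
          = (Ici s).indicator (fun t => Fd s * h' t) := by
        ext t; simp [indicator]
      simp only [e]
      rw [integral_indicator measurableSet_Ici, Measure.restrict_restrict measurableSet_Ici,
        integral_const_mul, ← ftc, intervalIntegral.integral_of_le hs.2, ← integral_Icc_eq_integral_Ioc]
      congr 3
      ext t; simp only [mem_inter_iff, mem_Ioc, mem_Ici, mem_Icc]
      constructor
      · rintro ⟨a, _, b⟩; exact ⟨a, b⟩
      · rintro ⟨a, b⟩; exact ⟨a, hs.1.trans_le a, b⟩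
    rw [e1, integral_integral_swap, e2]
    · have i1 : Integrable (fun s => Fd s * h s) muT := by
        have := ker_integrable (hFd.mul_bdd (c := 1) (g := eT) eT_cont.aestronglyMeasurable
          (Eventually.of_forall fun t => (eT_norm t).le)) hz
        refine this.congr (Eventually.of_forall fun t => ?_)
        simp only [hh]; ring
      simp only [mul_sub]
      rw [integral_sub (hFd.mul_const _) i1, integral_mul_const, h0]
      simp
    · have hp : Integrable (fun x : ℝ × ℝ => h' x.1 * Fd x.2) (muT.prod muT) := hi'.mul_prod hFd
      have hm : MeasurableSet {x : ℝ × ℝ | x.2 ≤ x.1} := measurableSet_le measurable_snd measurable_fst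
      refine (hp.indicator hm).congr (Eventually.of_forall fun x => ?_)
      simp only [indicator, mem_ofPred_eq, Function.uncurry]
      split_ifs
      · ring
      · rfl
  have hprim : Integrable (fun t => (∫ s in (0:ℝ)..t, Fd s) * h' t) muT := by
    have hcont : ContinuousOn (fun t => ∫ s in (0:ℝ)..t, Fd s) (uIcc 0 (2 * π)) :=
      intervalIntegral.continuousOn_primitive_interval
        (by rw [uIcc_of_le hpi]; exact (integrableOn_Icc_iff_integrableOn_Ioc).2 hFd)
    rw [uIcc_of_le hpi] at hcont
    exact (((hcont.mul hc'.continuousOn).integrableOn_compact isCompact_Icc).mono_set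
      Ioc_subset_Icc_self)
  have hD : Dz Φ z = Complex.I * ∫ t, (c * h' t + (∫ s in (0:ℝ)..t, Fd s) * h' t) ∂muT := by
    unfold Dz
    rw [← integral_const_mul]
    congr 1
    ext t
    rw [hΦ t]
    simp only [hh']
    linear_combination ((c + ∫ s in (0:ℝ)..t, Fd s) * (eT t * ((1 - z * eT t)⁻¹) ^ 2)) * Complex.I_mul_I
  have hz0 : ∫ t, h' t ∂muT = 0 := by
    have := ftc 0 (2 * π)
    rw [intervalIntegral.integral_of_le hpi] at this
    rw [this, hper, sub_self]
  rw [hD, integral_add (hi'.const_mul c) hprim, integral_const_mul, hz0, key]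
  unfold Cz
  simp only [hh, mul_assoc]
  ring

lemma trig_ineq (p : ℝ) (hp : 1 < p) (hp2 : p ≤ 2) :
    ∃ A B : ℝ, 0 < A ∧ 0 < B ∧ ∀ z : ℂ, 0 < z.re →
      ‖z‖ ^ p ≤ A * z.re ^ p - B * (z ^ (p : ℂ)).re := by
  have hpi := Real.pi_pos
  set c := -Real.cos (π * (1 + p) / 4) with hc
  have hc0 : 0 < c := by
    have := Real.cos_neg_of_pi_div_two_lt_of_lt (x := π * (1 + p) / 4) (by nlinarith) (by nlinarith)
    linarith
  set a0 := π * (1 + p) / (4 * p) with ha0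
  have hpa : p * a0 = π * (1 + p) / 4 := by rw [ha0]; field_simp
  have ha0pos : 0 < a0 := by positivity
  have ha0lt : a0 < π / 2 := by
    rw [ha0, div_lt_div_iff₀ (by positivity) (by norm_num)]; nlinarith
  set d := Real.cos a0 with hd
  have hd0 : 0 < d := Real.cos_pos_of_mem_Ioo ⟨by linarith, ha0lt⟩
  have hB : 0 < 1 / c := by positivity
  have hdp : 0 < d ^ p := Real.rpow_pos_of_pos hd0 p
  refine ⟨(1 + 1 / c) / d ^ p, 1 / c, by positivity, hB, fun z hz => ?_⟩
  have hz0 : z ≠ 0 := by rintro rfl; simp at hz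
  have hn : 0 < ‖z‖ := norm_pos_iff.2 hz0
  have harg : |z.arg| < π / 2 := Complex.abs_arg_lt_pi_div_two_iff.2 (Or.inl hz)
  have hre : z.re = ‖z‖ * Real.cos z.arg := (Complex.norm_mul_cos_arg z).symm
  have hcospos : 0 < Real.cos z.arg := by
    rw [hre] at hz; exact (pos_iff_pos_of_mul_pos hz).1 hn
  have hpow : (z ^ (p : ℂ)).re = ‖z‖ ^ p * Real.cos (p * z.arg) := by
    rw [Complex.cpow_ofReal_re, mul_comm z.arg]
  have main : 1 ≤ (1 + 1 / c) / d ^ p * Real.cos z.arg ^ p - 1 / c * Real.cos (p * z.arg) := by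
    have hca : Real.cos (p * z.arg) = Real.cos (p * |z.arg|) := by
      rw [← Real.cos_abs, abs_mul, abs_of_pos (by linarith : 0 < p)]
    have hcb : Real.cos z.arg = Real.cos |z.arg| := (Real.cos_abs _).symm
    rcases le_total a0 |z.arg| with h | h
    · have h1 : Real.cos (p * |z.arg|) ≤ -c := by
        rw [hc, neg_neg, ← hpa]
        apply Real.cos_le_cos_of_nonneg_of_le_pi (by positivity)
        · nlinarith
        · gcongr
      have h2 : 0 ≤ (1 + 1 / c) / d ^ p * Real.cos z.arg ^ p := by positivity
      have h3 : 1 / c * Real.cos (p * z.arg) ≤ 1 / c * (-c) := by rw [hca]; gcongr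
      have : 1 / c * (-c) = -1 := by field_simp
      linarith
    · have h1 : d ≤ Real.cos z.arg := by
        rw [hcb]
        exact Real.cos_le_cos_of_nonneg_of_le_pi (abs_nonneg _) (by linarith) h
      have h2 : (1 + 1 / c) / d ^ p * d ^ p ≤ (1 + 1 / c) / d ^ p * Real.cos z.arg ^ p := by
        gcongr
      rw [div_mul_cancel₀ _ hdp.ne'] at h2
      have h3 : 1 / c * Real.cos (p * z.arg) ≤ 1 / c * 1 := by gcongr; exact Real.cos_le_one _
      linarith
  have hnp : 0 < ‖z‖ ^ p := Real.rpow_pos_of_pos hn p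
  rw [hpow, hre, Real.mul_rpow hn.le hcospos.le]
  nlinarith [mul_le_mul_of_nonneg_left main hnp.le]

lemma riesz_pos (p : ℝ) (hp : 1 < p) (hp2 : p ≤ 2) :
    ∃ A : ℝ, 0 < A ∧ ∀ g : ℂ → ℂ, DifferentiableOn ℂ g (ball 0 1) →
      (∀ z ∈ ball (0:ℂ) 1, 0 < (g z).re) → (g 0).im = 0 → ∀ r ∈ Ioo (0:ℝ) 1,
      ∫ θ, ‖g (r * Complex.exp ((θ : ℂ) * Complex.I))‖ ^ p ∂muT ≤
        A * ∫ θ, (g (r * Complex.exp ((θ : ℂ) * Complex.I))).re ^ p ∂muT := by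
  obtain ⟨A, B, hA, hB, hAB⟩ := trig_ineq p hp hp2
  refine ⟨A, hA, fun g hg hpos h0 r hr => ?_⟩
  have hmem : ∀ θ : ℝ, (r : ℂ) * Complex.exp ((θ : ℂ) * Complex.I) ∈ ball (0:ℂ) 1 := fun θ => by
    simp [Complex.norm_exp_ofReal_mul_I, abs_of_pos hr.1, hr.2]
  have hcg : Continuous fun θ : ℝ => g ((r : ℂ) * Complex.exp ((θ : ℂ) * Complex.I)) :=
    hg.continuousOn.comp_continuous (by fun_prop) hmem
  have hdp : DifferentiableOn ℂ (fun z => g z ^ (p : ℂ)) (ball 0 1) :=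
    hg.cpow (differentiableOn_const _) fun z hz => Or.inl (hpos z hz)
  have hcp : Continuous fun θ : ℝ => g ((r : ℂ) * Complex.exp ((θ : ℂ) * Complex.I)) ^ (p : ℂ) :=
    hdp.continuousOn.comp_continuous (f := fun θ : ℝ => (r : ℂ) * Complex.exp ((θ : ℂ) * Complex.I))
      (by fun_prop) hmem
  have hint : ∀ {E : Type} [NormedAddCommGroup E] {f : ℝ → E}, Continuous f → Integrable f muT :=
    fun hf => (intervalIntegrable_iff_integrableOn_Ioc_of_le (by positivity)).1
      (hf.intervalIntegrable _ _)
  have hmean : ∫ θ : ℝ, g ((r : ℂ) * Complex.exp ((θ : ℂ) * Complex.I)) ^ (p : ℂ) ∂muT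
      = 2 * π * g 0 ^ (p : ℂ) := by
    have hd : DiffContOnCl ℂ (fun z => g z ^ (p : ℂ)) (ball 0 |r|) := by
      apply DifferentiableOn.diffContOnCl
      apply hdp.mono
      refine closure_ball_subset_closedBall.trans (closedBall_subset_ball ?_)
      rw [abs_of_pos hr.1]; exact hr.2
    have := hd.circleAverage
    rw [Real.circleAverage_def, intervalIntegral.integral_of_le (by positivity)] at this
    simp only [circleMap_zero] at this
    rw [← this]
    simp only [Complex.real_smul]
    push_cast
    have : (π : ℂ) ≠ 0 := by exact_mod_cast Real.pi_ne_zero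
    rw [← mul_assoc, mul_inv_cancel₀ (by simp), one_mul]
  have hg0 : 0 < (g 0).re := hpos 0 (by simp)
  have hpow0 : 0 ≤ (g 0 ^ (p : ℂ)).re := by
    have : g 0 = ((g 0).re : ℂ) := Complex.ext (by simp) (by simp [h0])
    rw [this, ← Complex.ofReal_cpow hg0.le, Complex.ofReal_re]
    positivity
  have hmre : ∫ θ : ℝ, (g ((r : ℂ) * Complex.exp ((θ : ℂ) * Complex.I)) ^ (p : ℂ)).re ∂muT
      = 2 * π * (g 0 ^ (p : ℂ)).re := by
    have := congrArg Complex.re hmean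
    rw [show (2 * (π : ℂ) * g 0 ^ (p : ℂ)) = ((2 * π : ℝ) : ℂ) * g 0 ^ (p : ℂ) by push_cast; rfl,
      Complex.re_ofReal_mul] at this
    rw [← this]
    exact integral_re (hint hcp)
  have hp0 : 0 ≤ p := by linarith
  have hcr : Continuous fun θ : ℝ => (g ((r : ℂ) * Complex.exp ((θ : ℂ) * Complex.I))).re ^ p :=
    (Complex.continuous_re.comp hcg).rpow_const fun _ => Or.inr hp0
  calc _ ≤ ∫ θ : ℝ, (A * (g (r * Complex.exp ((θ : ℂ) * Complex.I))).re ^ p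
        - B * (g ((r : ℂ) * Complex.exp ((θ : ℂ) * Complex.I)) ^ (p : ℂ)).re) ∂muT := by
        apply integral_mono
        · exact hint (hcg.norm.rpow_const fun _ => Or.inr hp0)
        · exact (hint (hcr.const_mul A)).sub (hint ((Complex.continuous_re.comp hcp).const_mul B))
        · exact fun θ => hAB _ (hpos _ (hmem θ))
    _ = A * ∫ θ, (g (r * Complex.exp ((θ : ℂ) * Complex.I))).re ^ p ∂muT
        - B * (2 * π * (g 0 ^ (p : ℂ)).re) := by
        have hcq : Continuous fun θ : ℝ =>
          (g ((r : ℂ) * Complex.exp ((θ : ℂ) * Complex.I)) ^ (p : ℂ)).re := Complex.continuous_re.comp hcp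
        rw [integral_sub (hint (hcr.const_mul A)) (hint (hcq.const_mul B)),
          integral_const_mul, integral_const_mul, hmre]
    _ ≤ _ := by
        have : 0 ≤ B * (2 * π * (g 0 ^ (p : ℂ)).re) := by positivity
        linarith

def zT (r θ : ℝ) : ℂ := (r : ℂ) * Complex.exp ((θ : ℂ) * Complex.I)

lemma zT_norm {r : ℝ} (hr : r ∈ Ioo (0:ℝ) 1) (θ : ℝ) : ‖zT r θ‖ = r := by
  simp [zT, Complex.norm_exp_ofReal_mul_I, abs_of_pos hr.1]

lemma zT_lt {r : ℝ} (hr : r ∈ Ioo (0:ℝ) 1) (θ : ℝ) : ‖zT r θ‖ < 1 := by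
  rw [zT_norm hr]; exact hr.2

lemma zT_cont (r : ℝ) : Continuous (zT r) := by unfold zT; fun_prop

lemma intT {E : Type} [NormedAddCommGroup E] {f : ℝ → E} (hf : Continuous f) : Integrable f muT :=
  (intervalIntegrable_iff_integrableOn_Ioc_of_le (by positivity)).1 (hf.intervalIntegrable _ _)

lemma fadd {E : Type} [NormedAddCommGroup E] {f g : ℝ → E} (hf : Integrable f muT)
    (hg : Integrable g muT) : Integrable (fun t => f t + g t) muT := hf.add hg

lemma fsub {E : Type} [NormedAddCommGroup E] {f g : ℝ → E} (hf : Integrable f muT)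
    (hg : Integrable g muT) : Integrable (fun t => f t - g t) muT := hf.sub hg

/-- the Cauchy kernel on the circle of radius `r` -/
def Kc (r θ t : ℝ) : ℂ := (1 - zT r θ * eT t)⁻¹

lemma Kc_cont {r : ℝ} (hr : r ∈ Ioo (0:ℝ) 1) : Continuous fun x : ℝ × ℝ => Kc r x.1 x.2 := by
  unfold Kc
  apply Continuous.inv₀
  · exact continuous_const.sub (((zT_cont r).comp continuous_fst).mul (eT_cont.comp continuous_snd))
  · exact fun x => ker_ne (zT_lt hr _) _

lemma Kc_bound {r : ℝ} (hr : r ∈ Ioo (0:ℝ) 1) (θ t : ℝ) : ‖Kc r θ t‖ ≤ (1 - r)⁻¹ :=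
  ker_bound hr.2 (zT_norm hr θ).le t

lemma Kc_symm (r θ t : ℝ) : (starRingEnd ℂ) (Kc r θ t) = Kc r t θ := by
  unfold Kc zT
  rw [map_inv₀, map_sub, map_mul, map_mul, map_one, Complex.conj_ofReal, eT_conj, ← eT_conj,
    ← eT_conj, Complex.conj_conj]
  ring

lemma ker_re {w : ℂ} (hw : ‖w‖ < 1) : 1 / 2 ≤ ((1 - w)⁻¹).re := by
  have h := poissonKer_eq hw
  have h1 := congrArg Complex.re h
  have h2 : 0 ≤ poissonKer w := by
    unfold poissonKer
    apply div_nonneg _ (by positivity)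
    nlinarith [norm_nonneg w]
  rw [Complex.ofReal_re, Complex.sub_re, Complex.add_re, Complex.conj_re, Complex.one_re] at h1
  linarith

lemma ker_re' {z : ℂ} (hz : ‖z‖ < 1) (t : ℝ) : 1 / 2 ≤ ((1 - z * eT t)⁻¹).re :=
  ker_re (by rw [norm_mul, eT_norm, mul_one]; exact hz)

lemma Kc_int_left {r : ℝ} (hr : r ∈ Ioo (0:ℝ) 1) (t : ℝ) : ∫ θ, (Kc r θ t).re ∂muT = 2 * π := by
  have hc : Continuous fun θ => Kc r θ t :=
    Continuous.comp (f := fun θ : ℝ => (θ, t)) (Kc_cont hr) (by fun_prop)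
  have hd : DiffContOnCl ℂ (fun z => (1 - z * eT t)⁻¹) (ball 0 |r|) := by
    apply DifferentiableOn.diffContOnCl
    intro z hz
    have hz' : ‖z‖ < 1 := by
      have := closure_ball_subset_closedBall hz
      rw [mem_closedBall_zero_iff, abs_of_pos hr.1] at this
      exact this.trans_lt hr.2
    apply DifferentiableAt.differentiableWithinAt
    apply DifferentiableAt.inv
    · fun_prop
    · exact ker_ne hz' t
  have h := hd.circleAverage
  rw [Real.circleAverage_def, intervalIntegral.integral_of_le (by positivity)] at h
  simp only [circleMap_zero, zero_mul, sub_zero, inv_one] at h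
  have h2 : ∫ θ, Kc r θ t ∂muT = ((2 * π : ℝ) : ℂ) := by
    have h3 : ((2 * π : ℝ) : ℂ) * ((2 * π)⁻¹ • ∫ θ, Kc r θ t ∂muT) = ((2 * π : ℝ) : ℂ) * 1 :=
      congrArg _ h
    rw [Complex.real_smul, ← mul_assoc, ← Complex.ofReal_mul,
      mul_inv_cancel₀ (by positivity : 2 * π ≠ 0)] at h3
    simpa using h3
  have := integral_re (intT hc)
  simp only [RCLike.re_eq_complex_re] at this
  rw [this, h2, Complex.ofReal_re]

lemma Kc_int_right {r : ℝ} (hr : r ∈ Ioo (0:ℝ) 1) (θ : ℝ) : ∫ t, (Kc r θ t).re ∂muT = 2 * π := by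
  rw [← Kc_int_left hr θ]
  congr 1
  ext t
  rw [← Kc_symm, Complex.conj_re]

lemma tangent {p : ℝ} (hp : 1 < p) {x s : ℝ} (hx : 0 ≤ x) (hs : 0 ≤ s) :
    s ^ p + p * s ^ (p - 1) * (x - s) ≤ x ^ p := by
  rcases hs.eq_or_lt with rfl | hs
  · rw [Real.zero_rpow (by linarith), Real.zero_rpow (by linarith)]
    simp; positivity
  have h := one_add_mul_self_le_rpow_one_add (s := x / s - 1) (p := p)
    (by have : 0 ≤ x / s := by positivity
        linarith) hp.le
  have e : 1 + (x / s - 1) = x / s := by ring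
  rw [e, Real.div_rpow hx hs.le, le_div_iff₀ (by positivity)] at h
  refine le_trans (le_of_eq ?_) h
  rw [Real.rpow_sub hs, Real.rpow_one]
  field_simp

lemma poisson_contr {p : ℝ} (hp : 1 < p) {φ : ℝ → ℝ} (h0 : ∀ t, 0 ≤ φ t)
    (hφ : Integrable φ muT) (hφp : Integrable (fun t => φ t ^ p) muT)
    {r : ℝ} (hr : r ∈ Ioo (0:ℝ) 1) :
    ∫ θ, (∫ t, φ t * (Kc r θ t).re ∂muT) ^ p ∂muT ≤ (2 * π) ^ p * ∫ t, φ t ^ p ∂muT := by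
  have hpi : 0 < 2 * π := by positivity
  have hkc : Continuous fun x : ℝ × ℝ => (Kc r x.1 x.2).re := Complex.continuous_re.comp (Kc_cont hr)
  have hkb : ∀ θ t, ‖(Kc r θ t).re‖ ≤ (1 - r)⁻¹ := fun θ t =>
    (Complex.abs_re_le_norm _).trans (Kc_bound hr θ t)
  have hk0 : ∀ θ t, 0 ≤ (Kc r θ t).re := fun θ t => by
    have := ker_re' (zT_lt hr θ) t
    unfold Kc; linarith
  have hct : ∀ θ, Continuous fun t => (Kc r θ t).re := fun θ =>
    Continuous.comp (f := fun t : ℝ => (θ, t)) hkc (by fun_prop)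
  have i1 : ∀ θ, Integrable (fun t => φ t * (Kc r θ t).re) muT := fun θ =>
    hφ.mul_bdd (c := (1 - r)⁻¹) (hct θ).aestronglyMeasurable (Eventually.of_forall fun t => hkb θ t)
  have i2 : ∀ θ, Integrable (fun t => φ t ^ p * (Kc r θ t).re) muT := fun θ =>
    hφp.mul_bdd (c := (1 - r)⁻¹) (hct θ).aestronglyMeasurable (Eventually.of_forall fun t => hkb θ t)
  have hprod : Integrable (fun x : ℝ × ℝ => φ x.2 ^ p * (Kc r x.1 x.2).re) (muT.prod muT) := by
    have : Integrable (fun x : ℝ × ℝ => (1:ℝ) * φ x.2 ^ p) (muT.prod muT) :=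
      (integrable_const (1:ℝ)).mul_prod hφp
    simp only [one_mul] at this
    exact this.mul_bdd (c := (1 - r)⁻¹) hkc.aestronglyMeasurable
      (Eventually.of_forall fun x => hkb x.1 x.2)
  have jensen : ∀ θ, (∫ t, φ t * (Kc r θ t).re ∂muT) ^ p ≤
      (2 * π) ^ (p - 1) * ∫ t, φ t ^ p * (Kc r θ t).re ∂muT := by
    intro θ
    set S := ∫ t, φ t * (Kc r θ t).re ∂muT with hS
    have hS0 : 0 ≤ S := integral_nonneg fun t => mul_nonneg (h0 t) (hk0 θ t)
    set s := S / (2 * π) with hs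
    have hs0 : 0 ≤ s := by positivity
    have hm : ∫ t, (s ^ p * (Kc r θ t).re + p * s ^ (p - 1) * (φ t * (Kc r θ t).re
        - s * (Kc r θ t).re)) ∂muT ≤ ∫ t, φ t ^ p * (Kc r θ t).re ∂muT := by
      apply integral_mono
      · exact ((intT (hct θ)).const_mul _).add ((fsub (i1 θ) ((intT (hct θ)).const_mul _)).const_mul _)
      · exact i2 θ
      · intro t
        have := mul_le_mul_of_nonneg_right (tangent hp (h0 t) hs0) (hk0 θ t)
        refine le_trans (le_of_eq ?_) this
        ring
    rw [integral_add ((intT (hct θ)).const_mul _)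
      ((fsub (i1 θ) ((intT (hct θ)).const_mul _)).const_mul _), integral_const_mul,
      integral_const_mul, integral_sub (i1 θ) ((intT (hct θ)).const_mul _), integral_const_mul,
      Kc_int_right hr, ← hS] at hm
    have e : S - s * (2 * π) = 0 := by rw [hs]; field_simp; ring
    rw [e, mul_zero, add_zero] at hm
    have e2 : S ^ p = (2 * π) ^ (p - 1) * (s ^ p * (2 * π)) := by
      rw [hs, Real.div_rpow hS0 hpi.le, Real.rpow_sub hpi, Real.rpow_one]
      field_simp
    rw [e2]
    gcongr
  calc _ ≤ ∫ θ, (2 * π) ^ (p - 1) * ∫ t, φ t ^ p * (Kc r θ t).re ∂muT ∂muT := by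
        apply integral_mono_of_nonneg
        · exact Eventually.of_forall fun θ =>
            Real.rpow_nonneg (integral_nonneg fun t => mul_nonneg (h0 t) (hk0 θ t)) _
        · exact hprod.integral_prod_left.const_mul _
        · exact Eventually.of_forall jensen
    _ = (2 * π) ^ (p - 1) * ∫ t, ∫ θ, φ t ^ p * (Kc r θ t).re ∂muT ∂muT := by
        rw [integral_const_mul, integral_integral_swap hprod]
    _ = _ := by
        simp only [integral_const_mul, Kc_int_left hr, integral_mul_const]
        rw [Real.rpow_sub hpi, Real.rpow_one]
        field_simp

lemma riesz_nonneg (p : ℝ) (hp : 1 < p) (hp2 : p ≤ 2) :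
    ∃ A : ℝ, 0 < A ∧ ∀ φ : ℝ → ℝ, (∀ t, 0 ≤ φ t) → Integrable φ muT →
      Integrable (fun t => φ t ^ p) muT → ∀ r ∈ Ioo (0:ℝ) 1,
      ∫ θ, ‖Cz (fun t => (φ t : ℂ)) (zT r θ)‖ ^ p ∂muT ≤ A * ∫ t, φ t ^ p ∂muT := by
  obtain ⟨A, hA, hR⟩ := riesz_pos p hp hp2
  refine ⟨A * (2 * π) ^ p, by positivity, fun φ h0 hφ hφp r hr => ?_⟩
  have hφc : Integrable (fun t => (φ t : ℂ)) muT := hφ.ofReal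
  have hre : ∀ z : ℂ, ‖z‖ < 1 → (Cz (fun t => (φ t : ℂ)) z).re
      = ∫ t, φ t * ((1 - z * eT t)⁻¹).re ∂muT := fun z hz => by
    have := integral_re (ker_integrable hφc hz)
    simp only [RCLike.re_eq_complex_re, Complex.re_ofReal_mul] at this
    exact this.symm
  by_cases hz : ∫ t, φ t ∂muT = 0
  · have hae : φ =ᵐ[muT] 0 := (integral_eq_zero_iff_of_nonneg h0 hφ).1 hz
    have hC : ∀ z, Cz (fun t => (φ t : ℂ)) z = 0 := fun z => by
      apply integral_eq_zero_of_ae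
      filter_upwards [hae] with t ht
      simp [ht]
    simp only [hC, norm_zero, Real.zero_rpow (by linarith : p ≠ 0), integral_zero]
    have : 0 ≤ ∫ t, φ t ^ p ∂muT := integral_nonneg fun t => Real.rpow_nonneg (h0 t) _
    positivity
  · have hpos : 0 < ∫ t, φ t ∂muT := lt_of_le_of_ne (integral_nonneg h0) (Ne.symm hz)
    have h1 : ∀ z ∈ ball (0:ℂ) 1, 0 < (Cz (fun t => (φ t : ℂ)) z).re := fun z hz => by
      have hz : ‖z‖ < 1 := by simpa using hz
      rw [hre z hz]
      have : ∫ t, φ t * (1 / 2) ∂muT ≤ ∫ t, φ t * ((1 - z * eT t)⁻¹).re ∂muT := by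
        apply integral_mono (hφ.mul_const _)
        · have := (ker_integrable hφc hz).re
          simpa [Complex.re_ofReal_mul] using this
        · exact fun t => mul_le_mul_of_nonneg_left (ker_re' hz t) (h0 t)
      rw [integral_mul_const] at this
      linarith
    have h2 : (Cz (fun t => (φ t : ℂ)) 0).im = 0 := by
      simp only [Cz, zero_mul, sub_zero, inv_one, mul_one]
      have := integral_im hφc
      simp only [RCLike.im_eq_complex_im, Complex.ofReal_im, integral_zero] at this
      exact this.symm
    have h3 := hR _ (Cz_differentiableOn hφc) h1 h2 r hr
    refine h3.trans ?_
    rw [mul_assoc]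
    refine mul_le_mul_of_nonneg_left ?_ hA.le
    refine le_trans (le_of_eq ?_) (poisson_contr hp h0 hφ hφp hr)
    congr 1
    ext θ
    exact congrArg (fun x : ℝ => x ^ p) (hre _ (zT_lt hr θ))

lemma Cz_cont {φ : ℝ → ℂ} (hφ : Integrable φ muT) {r : ℝ} (hr : r ∈ Ioo (0:ℝ) 1) :
    Continuous fun θ => Cz φ (zT r θ) :=
  (Cz_differentiableOn hφ).continuousOn.comp_continuous (zT_cont r)
    fun θ => by simpa using zT_lt hr θ

lemma four_pow {p : ℝ} (hp : 0 ≤ p) {a b c d : ℝ} (ha : 0 ≤ a) (hb : 0 ≤ b) (hc : 0 ≤ c) (hd : 0 ≤ d) :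
    (a + b + c + d) ^ p ≤ 4 ^ p * (a ^ p + b ^ p + c ^ p + d ^ p) := by
  have key : ∀ m : ℝ, 0 ≤ m → a ≤ m → b ≤ m → c ≤ m → d ≤ m →
      (a + b + c + d) ^ p ≤ 4 ^ p * m ^ p := fun m hm h1 h2 h3 h4 => by
    rw [← Real.mul_rpow (by norm_num) hm]
    exact Real.rpow_le_rpow (by positivity) (by linarith) hp
  have pa : 0 ≤ a ^ p := by positivity
  have pb : 0 ≤ b ^ p := by positivity
  have pc : 0 ≤ c ^ p := by positivity
  have pd : 0 ≤ d ^ p := by positivity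
  have hm : max (max a b) (max c d) ^ p ≤ a ^ p + b ^ p + c ^ p + d ^ p := by
    rcases max_choice (max a b) (max c d) with h | h <;> rw [h]
    · rcases max_choice a b with h | h <;> rw [h] <;> linarith
    · rcases max_choice c d with h | h <;> rw [h] <;> linarith
  refine (key (max (max a b) (max c d)) (by positivity) ?_ ?_ ?_ ?_).trans
    (mul_le_mul_of_nonneg_left hm (by positivity)) <;> simp

lemma riesz_le_two (p : ℝ) (hp : 1 < p) (hp2 : p ≤ 2) :
    ∃ A : ℝ, 0 < A ∧ ∀ φ : ℝ → ℂ, Integrable φ muT →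
      Integrable (fun t => ‖φ t‖ ^ p) muT → ∀ r ∈ Ioo (0:ℝ) 1,
      ∫ θ, ‖Cz φ (zT r θ)‖ ^ p ∂muT ≤ A * ∫ t, ‖φ t‖ ^ p ∂muT := by
  obtain ⟨A, hA, hR⟩ := riesz_nonneg p hp hp2
  refine ⟨4 ^ p * (A * 4), by positivity, fun φ hφ hφp r hr => ?_⟩
  have hp0 : 0 ≤ p := by linarith
  have part : ∀ u : ℂ → ℝ, Continuous u → (∀ z, 0 ≤ u z) → (∀ z, u z ≤ ‖z‖) →
      Integrable (fun t => ((u (φ t) : ℝ) : ℂ)) muT ∧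
      ∫ θ, ‖Cz (fun t => (u (φ t) : ℂ)) (zT r θ)‖ ^ p ∂muT ≤ A * ∫ t, ‖φ t‖ ^ p ∂muT := by
    intro u hu h0 h1
    have m : AEStronglyMeasurable (fun t => u (φ t)) muT :=
      hu.comp_aestronglyMeasurable hφ.aestronglyMeasurable
    have i1 : Integrable (fun t => u (φ t)) muT := hφ.mono m
      (Eventually.of_forall fun t => by rw [Real.norm_of_nonneg (h0 _)]; exact h1 _)
    have i2 : Integrable (fun t => u (φ t) ^ p) muT := by
      refine hφp.mono ((Real.continuous_rpow_const hp0).comp_aestronglyMeasurable m) ?_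
      refine Eventually.of_forall fun t => ?_
      rw [Real.norm_of_nonneg (Real.rpow_nonneg (h0 _) _),
        Real.norm_of_nonneg (by positivity)]
      exact Real.rpow_le_rpow (h0 _) (h1 _) hp0
    refine ⟨i1.ofReal, (hR _ (fun t => h0 _) i1 i2 r hr).trans ?_⟩
    refine mul_le_mul_of_nonneg_left (integral_mono i2 hφp fun t => ?_) hA.le
    exact Real.rpow_le_rpow (h0 _) (h1 _) hp0
  obtain ⟨j1, k1⟩ := part (fun z => max z.re 0) (by fun_prop) (fun z => le_max_right _ _)
    (fun z => max_le ((le_abs_self _).trans (Complex.abs_re_le_norm z)) (norm_nonneg _))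
  obtain ⟨j2, k2⟩ := part (fun z => max (-z.re) 0) (by fun_prop) (fun z => le_max_right _ _)
    (fun z => max_le ((neg_le_abs _).trans (Complex.abs_re_le_norm z)) (norm_nonneg _))
  obtain ⟨j3, k3⟩ := part (fun z => max z.im 0) (by fun_prop) (fun z => le_max_right _ _)
    (fun z => max_le ((le_abs_self _).trans (Complex.abs_im_le_norm z)) (norm_nonneg _))
  obtain ⟨j4, k4⟩ := part (fun z => max (-z.im) 0) (by fun_prop) (fun z => le_max_right _ _)
    (fun z => max_le ((neg_le_abs _).trans (Complex.abs_im_le_norm z)) (norm_nonneg _))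
  have hmx : ∀ x : ℝ, max x 0 - max (-x) 0 = x := fun x => by
    rcases le_total 0 x with h | h
    · rw [max_eq_left h, max_eq_right (by linarith)]; ring
    · rw [max_eq_right h, max_eq_left (by linarith)]; ring
  have dec : ∀ z : ℂ, ‖z‖ < 1 → Cz φ z =
      Cz (fun t => ((max (φ t).re 0 : ℝ) : ℂ)) z - Cz (fun t => ((max (-(φ t).re) 0 : ℝ) : ℂ)) z
      + Complex.I * (Cz (fun t => ((max (φ t).im 0 : ℝ) : ℂ)) z
        - Cz (fun t => ((max (-(φ t).im) 0 : ℝ) : ℂ)) z) := by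
    intro z hz
    have i1 := ker_integrable j1 hz
    have i2 := ker_integrable j2 hz
    have i3 := ker_integrable j3 hz
    have i4 := ker_integrable j4 hz
    unfold Cz
    rw [← integral_sub i1 i2, ← integral_sub i3 i4, ← integral_const_mul,
      ← integral_add (fsub i1 i2) ((fsub i3 i4).const_mul _)]
    congr 1
    ext t
    have e1 := congrArg (fun x : ℝ => (x : ℂ)) (hmx (φ t).re)
    have e2 := congrArg (fun x : ℝ => (x : ℂ)) (hmx (φ t).im)
    simp only [Complex.ofReal_sub] at e1 e2
    have e3 := Complex.re_add_im (φ t)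
    linear_combination (1 - z * eT t)⁻¹ * (-e3 - e1 - Complex.I * e2)
  have ic : ∀ {ψ : ℝ → ℂ}, Integrable ψ muT → Integrable (fun θ => ‖Cz ψ (zT r θ)‖ ^ p) muT :=
    fun h => intT ((Cz_cont h hr).norm.rpow_const fun _ => Or.inr hp0)
  calc ∫ θ, ‖Cz φ (zT r θ)‖ ^ p ∂muT ≤ ∫ θ, 4 ^ p * (
      ‖Cz (fun t => ((max (φ t).re 0 : ℝ) : ℂ)) (zT r θ)‖ ^ p
      + ‖Cz (fun t => ((max (-(φ t).re) 0 : ℝ) : ℂ)) (zT r θ)‖ ^ p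
      + ‖Cz (fun t => ((max (φ t).im 0 : ℝ) : ℂ)) (zT r θ)‖ ^ p
      + ‖Cz (fun t => ((max (-(φ t).im) 0 : ℝ) : ℂ)) (zT r θ)‖ ^ p) ∂muT := by
        apply integral_mono (ic hφ)
        · exact ((((ic j1).add (ic j2)).add (ic j3)).add (ic j4)).const_mul _
        · intro θ
          refine le_trans ?_ (four_pow hp0 (norm_nonneg _) (norm_nonneg _) (norm_nonneg _) (norm_nonneg _))
          refine Real.rpow_le_rpow (norm_nonneg _) ?_ hp0
          rw [dec _ (zT_lt hr θ)]
          refine (norm_add_le _ _).trans ?_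
          rw [norm_mul, Complex.norm_I, one_mul, add_assoc (_ + _)]
          exact add_le_add (norm_sub_le _ _) (norm_sub_le _ _)
    _ ≤ _ := by
        rw [integral_const_mul, integral_add (fadd (fadd (ic j1) (ic j2)) (ic j3)) (ic j4),
          integral_add (fadd (ic j1) (ic j2)) (ic j3), integral_add (ic j1) (ic j2), mul_assoc]
        refine mul_le_mul_of_nonneg_left ?_ (by positivity)
        linarith

lemma riesz_all (p : ℝ) (hp : 1 < p) :
    ∃ A : ℝ, 0 < A ∧ ∀ φ : ℝ → ℂ, Integrable φ muT → MemLp φ (ENNReal.ofReal p) muT →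
      ∀ r ∈ Ioo (0:ℝ) 1,
      ∫ θ, ‖Cz φ (zT r θ)‖ ^ p ∂muT ≤ A * ∫ t, ‖φ t‖ ^ p ∂muT := by
  have hp0 : 0 < p := by linarith
  rcases le_or_gt p 2 with hp2 | hp2
  · obtain ⟨A, hA, h⟩ := riesz_le_two p hp hp2
    refine ⟨A, hA, fun φ hφ hφp r hr => h φ hφ ?_ r hr⟩
    have := hφp.integrable_norm_rpow (by simpa using hp0) (by simp)
    simpa [ENNReal.toReal_ofReal hp0.le] using this
  have hpq : p.HolderConjugate (Real.conjExponent p) := Real.HolderConjugate.conjExponent hp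
  set q := Real.conjExponent p with hq
  have hq1 : 1 < q := hpq.symm.lt
  have hq0 : 0 < q := by linarith
  have hmul : (p - 1) * q = p := hpq.sub_one_mul_conj
  have hq2 : q ≤ 2 := by nlinarith
  obtain ⟨A, hA, h⟩ := riesz_le_two q hq1 hq2
  refine ⟨A ^ (p - 1), by positivity, fun φ hφ hφp r hr => ?_⟩
  set g : ℝ → ℂ := fun θ => Cz φ (zT r θ) with hg
  have hgc : Continuous g := Cz_cont hφ hr
  set ψ : ℝ → ℂ := fun θ => (starRingEnd ℂ) (g θ) * ((‖g θ‖ ^ (p - 2) : ℝ) : ℂ) with hψ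
  have hψc : Continuous ψ := (Complex.continuous_conj.comp hgc).mul
    (Complex.continuous_ofReal.comp (hgc.norm.rpow_const fun _ => Or.inr (by linarith)))
  have hψn : ∀ θ, ‖ψ θ‖ ^ q = ‖g θ‖ ^ p := fun θ => by
    have : ‖ψ θ‖ = ‖g θ‖ ^ (p - 1) := by
      simp only [hψ]
      rw [norm_mul, RCLike.norm_conj, Complex.norm_real, Real.norm_of_nonneg (by positivity)]
      rcases (norm_nonneg (g θ)).eq_or_lt with h0 | h0
      · rw [← h0, Real.zero_rpow (by linarith), zero_mul]
        exact (Real.zero_rpow (by linarith)).symm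
      · rw [show p - 1 = 1 + (p - 2) by ring, Real.rpow_add h0, Real.rpow_one]
    rw [this, ← Real.rpow_mul (norm_nonneg _), hmul]
  have hgψ : ∀ θ, g θ * ψ θ = ((‖g θ‖ ^ p : ℝ) : ℂ) := fun θ => by
    simp only [hψ]
    rw [← mul_assoc, Complex.mul_conj']
    rcases (norm_nonneg (g θ)).eq_or_lt with h0 | h0
    · rw [← h0, Real.zero_rpow hp0.ne']; simp
    · rw [show p = 2 + (p - 2) by ring, Real.rpow_add h0]
      push_cast
      norm_num
  set X := ∫ θ, ‖g θ‖ ^ p ∂muT with hX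
  set Y := ∫ t, ‖φ t‖ ^ p ∂muT with hY
  have hX0 : 0 ≤ X := integral_nonneg fun θ => by positivity
  have hY0 : 0 ≤ Y := integral_nonneg fun θ => by positivity
  set η : ℝ → ℂ := fun θ => (starRingEnd ℂ) (ψ θ) with hη
  have hηc : Continuous η := Complex.continuous_conj.comp hψc
  have hηi : Integrable η muT := intT hηc
  set H : ℝ → ℂ := fun t => Cz η (zT r t) with hH
  have hHc : Continuous H := Cz_cont hηi hr
  have hHeq : ∀ t, ∫ θ, Kc r θ t * ψ θ ∂muT = (starRingEnd ℂ) (H t) := fun t => by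
    simp only [hH, Cz]
    rw [← integral_conj]
    congr 1
    ext θ
    rw [map_mul]
    have := Kc_symm r t θ
    unfold Kc at this
    simp only [hη]
    rw [this, Complex.conj_conj, mul_comm]
    rfl
  have fub : ∫ θ, g θ * ψ θ ∂muT = ∫ t, φ t * (starRingEnd ℂ) (H t) ∂muT := by
    have e1 : ∀ θ, g θ * ψ θ = ∫ t, φ t * Kc r θ t * ψ θ ∂muT := fun θ => by
      rw [integral_mul_const]; rfl
    have hprod : Integrable (fun x : ℝ × ℝ => φ x.2 * Kc r x.1 x.2 * ψ x.1) (muT.prod muT) := by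
      have h1 : Integrable (fun x : ℝ × ℝ => ψ x.1 * φ x.2) (muT.prod muT) :=
        (intT hψc).mul_prod hφ
      have h2 := h1.mul_bdd (c := (1 - r)⁻¹) (Kc_cont hr).aestronglyMeasurable
        (Eventually.of_forall fun x => Kc_bound hr x.1 x.2)
      refine h2.congr (Eventually.of_forall fun x => ?_)
      simp only
      ring
    simp only [e1]
    rw [integral_integral_swap hprod]
    congr 1
    ext t
    simp only [mul_assoc]
    rw [integral_const_mul, hHeq]
  have hXle : X ≤ ∫ t, ‖φ t‖ * ‖H t‖ ∂muT := by
    have e : ((X : ℝ) : ℂ) = ∫ t, φ t * (starRingEnd ℂ) (H t) ∂muT := by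
      rw [← fub]
      simp only [hgψ]
      exact integral_ofReal.symm
    calc X = ‖((X : ℝ) : ℂ)‖ := by rw [Complex.norm_real, Real.norm_of_nonneg hX0]
      _ ≤ ∫ t, ‖φ t * (starRingEnd ℂ) (H t)‖ ∂muT := by rw [e]; exact norm_integral_le_integral_norm _
      _ = _ := by simp only [norm_mul, RCLike.norm_conj]
  have hHm : MemLp H (ENNReal.ofReal q) muT := by
    have h1 : ∀ t, ‖H t‖ ≤ (∫ s, ‖η s‖ ∂muT) * (1 - r)⁻¹ := fun t => by
      simp only [hH, Cz]
      refine (norm_integral_le_integral_norm _).trans ?_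
      rw [← integral_mul_const]
      refine integral_mono (ker_integrable hηi (zT_lt hr t)).norm (hηi.norm.mul_const _) fun s => ?_
      simp only [norm_mul]
      exact mul_le_mul_of_nonneg_left (Kc_bound hr t s) (norm_nonneg _)
    exact MemLp.of_bound hHc.aestronglyMeasurable _ (Eventually.of_forall h1)
  have hold := integral_mul_norm_le_Lp_mul_Lq hpq hφp hHm
  have hHq : ∫ t, ‖H t‖ ^ q ∂muT ≤ A * X := by
    have hηn : ∀ t, ‖η t‖ ^ q = ‖g t‖ ^ p := fun t => by
      simp only [hη]; rw [RCLike.norm_conj, hψn]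
    have := h η hηi (intT (hηc.norm.rpow_const fun _ => Or.inr hq0.le)) r hr
    simpa only [hηn] using this
  have hHq0 : 0 ≤ ∫ t, ‖H t‖ ^ q ∂muT := integral_nonneg fun θ => by positivity
  have hfin : X ≤ Y ^ (1 / p) * (A * X) ^ (1 / q) :=
    (hXle.trans hold).trans (mul_le_mul_of_nonneg_left
      (Real.rpow_le_rpow hHq0 hHq (by positivity)) (by positivity))
  rcases hX0.eq_or_lt with h0 | h0
  · rw [← h0]; positivity
  have hpw := Real.rpow_le_rpow hX0 hfin hp0.le
  have hpq' : 1 / q * p = p - 1 := by rw [← hmul]; field_simp; linarith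
  rw [Real.mul_rpow (by positivity) (by positivity), ← Real.rpow_mul hY0,
    ← Real.rpow_mul (by positivity), hpq', one_div_mul_cancel hp0.ne', Real.rpow_one,
    Real.mul_rpow hA.le hX0] at hpw
  have e : X ^ p = X * X ^ (p - 1) := by
    nth_rewrite 2 [← Real.rpow_one X]
    rw [← Real.rpow_add h0]; congr 1; ring
  rw [e] at hpw
  have hX1 : 0 < X ^ (p - 1) := by positivity
  have : X * X ^ (p - 1) ≤ (A ^ (p - 1) * Y) * X ^ (p - 1) := by linarith
  exact le_of_mul_le_mul_right this hX1

lemma final_one {p A : ℝ} (hp : 1 < p) (hA : 0 < A)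
    (hR : ∀ φ : ℝ → ℂ, Integrable φ muT → MemLp φ (ENNReal.ofReal p) muT →
      ∀ r ∈ Ioo (0:ℝ) 1,
      ∫ θ, ‖Cz φ (zT r θ)‖ ^ p ∂muT ≤ A * ∫ t, ‖φ t‖ ^ p ∂muT)
    {Φ Fd : ℝ → ℂ} {c : ℂ} (hFd : Integrable Fd muT)
    (hΦ : ∀ t, Φ t = c + ∫ s in (0:ℝ)..t, Fd s) (h0 : ∫ s, Fd s ∂muT = 0)
    (hL : MemLp Fd (ENNReal.ofReal p) muT) {g : ℂ → ℂ}
    (hg : ∀ z : ℂ, ‖z‖ < 1 → g z = (1 / (2 * π)) * Dz Φ z) :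
    DifferentiableOn ℂ g (ball 0 1) ∧ ∀ r ∈ Ioo (0:ℝ) 1, Mp p g r ≤ A ^ (1 / p) * lpNormT p Fd := by
  have hp0 : 0 < p := by linarith
  have hi : Integrable (fun t => Fd t * eT t) muT :=
    hFd.mul_bdd (c := 1) (g := eT) eT_cont.aestronglyMeasurable
          (Eventually.of_forall fun t => (eT_norm t).le)
  have hL' : MemLp (fun t => Fd t * eT t) (ENNReal.ofReal p) muT := by
    refine hL.mono hi.aestronglyMeasurable (Eventually.of_forall fun t => ?_)
    rw [norm_mul, eT_norm, mul_one]
  have hg' : ∀ z : ℂ, ‖z‖ < 1 →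
      g z = (1 / (2 * π)) * (-Complex.I * Cz (fun t => Fd t * eT t) z) := fun z hz => by
    rw [hg z hz, by_parts hFd hΦ h0 hz]
  refine ⟨?_, fun r hr => ?_⟩
  · refine DifferentiableOn.congr (((Cz_differentiableOn hi).const_mul (-Complex.I)).const_mul
      (1 / (2 * π) : ℂ)) fun z hz => ?_
    exact hg' z (by simpa using hz)
  · have hb := hR _ hi hL' r hr
    simp only [norm_mul, eT_norm, mul_one] at hb
    unfold Mp lpNormT
    rw [intervalIntegral.integral_of_le (by positivity), intervalIntegral.integral_of_le (by positivity)]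
    have hY0 : 0 ≤ ∫ t in Ioc 0 (2 * π), ‖Fd t‖ ^ p := integral_nonneg fun θ => by positivity
    rw [← Real.mul_rpow hA.le (by positivity)]
    refine Real.rpow_le_rpow
      (mul_nonneg (by positivity) (integral_nonneg fun θ => by positivity)) ?_ (by positivity)
    rw [mul_left_comm]
    refine mul_le_mul_of_nonneg_left (le_trans ?_ hb) (by positivity)
    have hpi : 1 ≤ 2 * π := by have := Real.pi_gt_three; linarith
    refine integral_mono_of_nonneg (Eventually.of_forall fun θ => by simp only [Pi.zero_apply]; positivity)
      (intT ((Cz_cont hi hr).norm.rpow_const fun _ => Or.inr hp0.le))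
      (Eventually.of_forall fun θ => ?_)
    refine Real.rpow_le_rpow (norm_nonneg _) ?_ hp0.le
    have e := hg' _ (zT_lt hr θ)
    change ‖g (zT r θ)‖ ≤ _
    rw [e, norm_mul, norm_mul, norm_neg, Complex.norm_I, one_mul]
    have h1 : ‖(1 / (2 * π) : ℂ)‖ ≤ 1 := by
      rw [show (1 / (2 * π) : ℂ) = ((1 / (2 * π) : ℝ) : ℂ) by push_cast; rfl, Complex.norm_real,
        Real.norm_of_nonneg (by positivity)]
      exact (div_le_one (by positivity)).2 hpi
    exact mul_le_of_le_one_left (norm_nonneg _) h1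

/-- For `p ∈ (1,∞)` there is a constant `A_p` such that for every
absolutely continuous `F : 𝕋 → ℂ` with `Ḟ ∈ L^p(𝕋)` and `f = P[F]`, both `f_z` and
`conj (f_z̄)` lie in `H^p(𝔻)` with `max(‖f_z‖_p, ‖conj (f_z̄)‖_p) ≤ A_p ‖Ḟ‖_{L^p}`. -/
theorem stmt0 (p : ℝ) (hp : 1 < p) :
    ∃ A : ℝ, 0 < A ∧ ∀ (F : ℂ → ℂ) (Fd : ℝ → ℂ),
      IsACDeriv F Fd →
      MemLpT (ENNReal.ofReal p) Fd →
      MemHp p (wdz (poissonInt F)) ∧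
      MemHp p (fun z => (starRingEnd ℂ) (wdzb (poissonInt F) z)) ∧
      ∀ r ∈ Ioo (0:ℝ) 1,
        max (Mp p (wdz (poissonInt F)) r)
            (Mp p (fun z => (starRingEnd ℂ) (wdzb (poissonInt F) z)) r)
          ≤ A * lpNormT p Fd := by
  obtain ⟨A, hA, hR⟩ := riesz_all p hp
  refine ⟨A ^ (1 / p), by positivity, fun F Fd hF hL => ?_⟩
  obtain ⟨hI, -, hprim⟩ := hF
  have hFd : Integrable Fd muT :=
    (intervalIntegrable_iff_integrableOn_Ioc_of_le (by positivity)).1 (hI 0 (2 * π))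
  have h0 : ∫ s, Fd s ∂muT = 0 := by
    have := hprim (2 * π)
    rw [intervalIntegral.integral_of_le (by positivity)] at this
    push_cast at this
    rw [Complex.exp_two_pi_mul_I] at this
    exact left_eq_add.1 this
  have hFc : Integrable (fun t : ℝ => F (Complex.exp ((t : ℂ) * Complex.I))) muT := by
    simp only [hprim]
    exact intT (continuous_const.add (intervalIntegral.continuous_primitive hI 0))
  obtain ⟨d1, b1⟩ := final_one hp hA hR hFd hprim h0 hL (g := wdz (poissonInt F))
    (fun z hz => (wd_eq hFc hz).1)
  have hFd' : Integrable (fun t => (starRingEnd ℂ) (Fd t)) muT :=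
    (Complex.conjCLE.toContinuousLinearMap).integrable_comp hFd
  obtain ⟨d2, b2⟩ := final_one hp hA hR hFd' (c := (starRingEnd ℂ) (F 1))
    (Φ := fun t => (starRingEnd ℂ) (F (Complex.exp ((t : ℂ) * Complex.I))))
    (fun t => by
      simp only [hprim t, map_add]
      congr 1
      simp only [intervalIntegral, map_sub, ← integral_conj])
    (by rw [integral_conj, h0, map_zero])
    (by
      refine MemLp.mono hL hFd'.aestronglyMeasurable (Eventually.of_forall fun t => ?_)
      rw [RCLike.norm_conj])
    (g := fun z => (starRingEnd ℂ) (wdzb (poissonInt F) z))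
    (fun z hz => (wd_eq hFc hz).2)
  have hn : lpNormT p (fun t => (starRingEnd ℂ) (Fd t)) = lpNormT p Fd := by
    simp only [lpNormT, RCLike.norm_conj]
  rw [hn] at b2
  exact ⟨⟨d1, _, b1⟩, ⟨d2, _, b2⟩, fun r hr => max_le (b1 r hr) (b2 r hr)⟩

end
end

section
/- Let F : 𝕋 → ℂ be absolutely continuous with Ḟ ∈ L¹(𝕋), and let f = P[F] be its Poisson integral. Then f_z and the conjugate of f_z̄ belong to the analytic Hardy space H¹(𝔻) if and only if the Hilbert transform H(Ḟ) belongs to L¹(𝕋); and in that case 2 i z f_z(z) = P[Ḟ + i H(Ḟ)](z) for all z ∈ 𝔻. -/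
open MeasureTheory Complex Metric Set Filter
open scoped Real Topology ENNReal

noncomputable section

/-- The Herglotz kernel. -/
def kk (w : ℂ) : ℂ := (1 + w) / (1 - w)

/-- rotated exponential -/
def ee (t : ℝ) : ℂ := Complex.exp (-(t : ℂ) * Complex.I)

/-- The Herglotz integral. -/
def herg (φ : ℝ → ℂ) (z : ℂ) : ℂ :=
  (1 / (2 * π)) * ∫ t in (0:ℝ)..(2 * π), kk (z * ee t) * φ t

lemma ee_norm (t : ℝ) : ‖ee t‖ = 1 := by
  have : ee t = Complex.exp (((-t : ℝ) : ℂ) * Complex.I) := by simp [ee]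
  rw [this, Complex.norm_exp_ofReal_mul_I]

lemma ee_cont : Continuous ee := by unfold ee; fun_prop

lemma ee_periodic : Function.Periodic ee (2 * π) := by
  intro t
  unfold ee
  have : -((t + 2 * π : ℝ) : ℂ) * I = -(t : ℂ) * I - 2 * π * I := by push_cast; ring
  rw [this, Complex.exp_sub, Complex.exp_two_pi_mul_I, div_one]

lemma norm_mul_ee (z : ℂ) (t : ℝ) : ‖z * ee t‖ = ‖z‖ := by simp [ee_norm]

lemma one_sub_ne {w : ℂ} (hw : ‖w‖ < 1) : 1 - w ≠ 0 := by
  intro h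
  have : w = 1 := by linear_combination -h
  simp [this] at hw

lemma one_sub_norm_le (w : ℂ) : 1 - ‖w‖ ≤ ‖1 - w‖ := by
  have := norm_sub_norm_le (1 : ℂ) w
  simpa using this

lemma kk_bound {w : ℂ} (hw : ‖w‖ < 1) : ‖kk w‖ ≤ 2 / (1 - ‖w‖) := by
  unfold kk
  rw [norm_div]
  have h1 : ‖1 + w‖ ≤ 2 := by
    calc ‖1 + w‖ ≤ ‖(1:ℂ)‖ + ‖w‖ := norm_add_le _ _
      _ ≤ 2 := by simp; linarith
  have h2 := one_sub_norm_le w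
  have h3 : 0 < 1 - ‖w‖ := by linarith
  gcongr

lemma poissonKer_eq_s1 (z : ℂ) : poissonKer z = (kk z).re := by
  unfold kk poissonKer
  rw [div_re, ← normSq_eq_norm_sq, ← normSq_eq_norm_sq, ← add_div]
  congr 1
  simp [normSq_apply]
  ring

lemma kk_re_pos {w : ℂ} (hw : ‖w‖ < 1) : 0 ≤ (kk w).re := by
  rw [← poissonKer_eq_s1, poissonKer]
  have : ‖w‖ ^ 2 ≤ 1 := by nlinarith [norm_nonneg w]
  exact div_nonneg (by linarith) (by positivity)

lemma kk_hasDerivAt {w : ℂ} (hw : ‖w‖ < 1) : HasDerivAt kk (2 / (1 - w) ^ 2) w := by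
  have h := ((hasDerivAt_id w).const_add 1).div ((hasDerivAt_id w).const_sub 1) (one_sub_ne hw)
  have e : (2:ℂ) / (1 - w) ^ 2 = (1 * (1 - id w) - (1 + id w) * -1) / (1 - id w) ^ 2 := by
    simp; ring
  rw [e]
  exact h

lemma kk_conj (w : ℂ) : (starRingEnd ℂ) (kk w) = kk ((starRingEnd ℂ) w) := by
  simp [kk]

lemma kk_ee_cont {z : ℂ} (hz : ‖z‖ < 1) : Continuous fun t => kk (z * ee t) := by
  rw [continuous_iff_continuousAt]
  intro t
  have h1 : ContinuousAt kk (z * ee t) := (kk_hasDerivAt (by rwa [norm_mul_ee])).continuousAt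
  exact ContinuousAt.comp (f := fun t => z * ee t) h1
    (continuousAt_const.mul ee_cont.continuousAt)

lemma dk_ee_cont {z : ℂ} (hz : ‖z‖ < 1) : Continuous fun t => 2 / (1 - z * ee t) ^ 2 * ee t := by
  have := ee_cont
  refine Continuous.mul (Continuous.div (by fun_prop) (by fun_prop) ?_) this
  intro t
  exact pow_ne_zero _ (one_sub_ne (by rwa [norm_mul_ee]))

lemma herg_hasDerivAt {φ : ℝ → ℂ} (hφ : IntervalIntegrable φ volume 0 (2 * π)) {z : ℂ}
    (hz : ‖z‖ < 1) :
    HasDerivAt (herg φ)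
      ((1 / (2 * π)) * ∫ t in (0:ℝ)..(2 * π), (2 / (1 - z * ee t) ^ 2 * ee t) * φ t) z := by
  unfold herg
  refine HasDerivAt.const_mul _ ?_
  set ρ : ℝ := (1 + ‖z‖) / 2 with hρ
  have hρ1 : ρ < 1 := by rw [hρ]; linarith
  have hρz : ‖z‖ < ρ := by rw [hρ]; linarith
  have hs : ball (0:ℂ) ρ ∈ 𝓝 z := isOpen_ball.mem_nhds (by simpa using hρz)
  refine (intervalIntegral.hasDerivAt_integral_of_dominated_loc_of_deriv_le
    (F := fun z t => kk (z * ee t) * φ t)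
    (F' := fun z t => (2 / (1 - z * ee t) ^ 2 * ee t) * φ t)
    (bound := fun t => 2 / (1 - ρ) ^ 2 * ‖φ t‖) hs ?_ ?_ ?_ ?_ ?_ ?_).2
  · filter_upwards [hs] with x hx
    have hx : ‖x‖ < 1 := lt_trans (by simpa using hx) hρ1
    exact ((hφ.continuousOn_mul (kk_ee_cont hx).continuousOn).def').aestronglyMeasurable
  · exact hφ.continuousOn_mul (kk_ee_cont hz).continuousOn
  · exact ((hφ.continuousOn_mul (dk_ee_cont hz).continuousOn).def').aestronglyMeasurable
  · refine Eventually.of_forall fun t _ x hx => ?_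
    have hx : ‖x‖ < ρ := by simpa using hx
    rw [norm_mul, norm_mul, ee_norm, norm_div, norm_pow]
    have h2 := one_sub_norm_le (x * ee t)
    rw [norm_mul_ee] at h2
    have h3 : 0 < 1 - ρ := by linarith
    have h4 : 1 - ρ ≤ ‖1 - x * ee t‖ := by linarith
    simp only [mul_one, Complex.norm_ofNat]
    gcongr
  · exact hφ.norm.const_mul _
  · refine Eventually.of_forall fun t _ x hx => ?_
    have hx : ‖x‖ < ρ := by simpa using hx
    have h1 : HasDerivAt (fun x => x * ee t) (ee t) x := by
      simpa using (hasDerivAt_id x).mul_const (ee t)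
    have h2 := kk_hasDerivAt (w := x * ee t) (by rw [norm_mul_ee]; linarith)
    exact (HasDerivAt.comp x h2 h1).mul_const _

lemma herg_diffOn {φ : ℝ → ℂ} (hφ : IntervalIntegrable φ volume 0 (2 * π)) :
    DifferentiableOn ℂ (herg φ) (ball 0 1) := fun z hz =>
  (herg_hasDerivAt hφ (by simpa using hz)).differentiableAt.differentiableWithinAt

lemma ibp_aux {φ u u' : ℝ → ℂ} {T : ℝ} (hT : 0 ≤ T) (hφ : IntervalIntegrable φ volume 0 T)
    (hu : ∀ t, HasDerivAt u (u' t) t) (hu' : Continuous u') :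
    ∫ t in (0:ℝ)..T, u' t * (∫ s in (0:ℝ)..t, φ s) = ∫ s in (0:ℝ)..T, (u T - u s) * φ s := by
  have hφ' : IntegrableOn φ (Ioc 0 T) := (intervalIntegrable_iff_integrableOn_Ioc_of_le hT).1 hφ
  have hu'' : IntegrableOn u' (Ioc 0 T) :=
    (intervalIntegrable_iff_integrableOn_Ioc_of_le hT).1 (hu'.intervalIntegrable _ _)
  have hprod : Integrable (fun p : ℝ × ℝ => u' p.1 * φ p.2)
      ((volume.restrict (Ioc 0 T)).prod (volume.restrict (Ioc 0 T))) :=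
    Integrable.mul_prod hu'' hφ'
  have hm : MeasurableSet {p : ℝ × ℝ | p.2 ≤ p.1} := measurableSet_le measurable_snd measurable_fst
  have hind := hprod.indicator hm
  have key := integral_integral_swap (f := fun t s => {p : ℝ × ℝ | p.2 ≤ p.1}.indicator
    (fun p : ℝ × ℝ => u' p.1 * φ p.2) (t, s)) (μ := volume.restrict (Ioc 0 T))
    (ν := volume.restrict (Ioc 0 T)) hind
  rw [intervalIntegral.integral_of_le hT, intervalIntegral.integral_of_le hT]
  refine Eq.trans ?_ (key.trans ?_)
  · refine setIntegral_congr_fun measurableSet_Ioc fun t ht => ?_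
    rw [intervalIntegral.integral_of_le ht.1.le, ← integral_const_mul]
    have : (fun s => {p : ℝ × ℝ | p.2 ≤ p.1}.indicator (fun p : ℝ × ℝ => u' p.1 * φ p.2) (t, s))
        = (Iic t).indicator (fun s => u' t * φ s) := by
      ext s; simp [indicator]
    rw [this, setIntegral_indicator measurableSet_Iic]
    congr 2
    ext s; simp only [mem_Ioc, mem_inter_iff, mem_Iic]; constructor
    · rintro ⟨h1, h2⟩; exact ⟨⟨h1, h2.trans ht.2⟩, h2⟩
    · rintro ⟨⟨h1, h2⟩, h3⟩; exact ⟨h1, h3⟩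
  · refine setIntegral_congr_fun measurableSet_Ioc fun s hs => ?_
    have : (fun t => {p : ℝ × ℝ | p.2 ≤ p.1}.indicator (fun p : ℝ × ℝ => u' p.1 * φ p.2) (t, s))
        = (Ici s).indicator (fun t => u' t * φ s) := by
      ext s; simp [indicator]
    rw [this, setIntegral_indicator measurableSet_Ici]
    have e : Ioc 0 T ∩ Ici s = Icc s T := by
      ext x; simp only [mem_Ioc, mem_inter_iff, mem_Ici, mem_Icc]; constructor
      · rintro ⟨⟨h1, h2⟩, h3⟩; exact ⟨h3, h2⟩
      · rintro ⟨h1, h2⟩; exact ⟨⟨hs.1.trans_le h1, h2⟩, h1⟩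
    rw [e, integral_Icc_eq_integral_Ioc, ← intervalIntegral.integral_of_le hs.2,
      intervalIntegral.integral_mul_const,
      intervalIntegral.integral_eq_sub_of_hasDerivAt (fun x _ => hu x)
        (hu'.intervalIntegrable _ _)]

lemma ee_hasDerivAt (t : ℝ) : HasDerivAt ee (-I * ee t) t := by
  unfold ee
  have h1 : HasDerivAt (fun t : ℝ => -(t : ℂ) * I) (-1 * I) t :=
    (HasDerivAt.ofReal_comp (hasDerivAt_id t)).neg.mul_const I
  have := h1.cexp
  convert this using 1
  ring

lemma herg_ibp {Φ φ : ℝ → ℂ} {c : ℂ} (hφ : IntervalIntegrable φ volume 0 (2 * π))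
    (hΦ : ∀ t, Φ t = c + ∫ s in (0:ℝ)..t, φ s) (h0 : ∫ s in (0:ℝ)..(2 * π), φ s = 0) {z : ℂ}
    (hz : ‖z‖ < 1) : I * z * deriv (herg Φ) z = herg φ z := by
  have hΦc : ContinuousOn Φ (uIcc 0 (2 * π)) := by
    have e : Φ = fun t => c + ∫ s in (0:ℝ)..t, φ s := funext hΦ
    rw [e]
    exact continuousOn_const.add (intervalIntegral.continuousOn_primitive_interval'
      hφ left_mem_uIcc)
  rw [(herg_hasDerivAt hΦc.intervalIntegrable hz).deriv]
  have hu : ∀ t, HasDerivAt (fun t => kk (z * ee t))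
      (-I * z * (2 / (1 - z * ee t) ^ 2 * ee t)) t := by
    intro t
    have h2 := kk_hasDerivAt (w := z * ee t) (by rwa [norm_mul_ee])
    have := HasDerivAt.comp t h2 ((ee_hasDerivAt t).const_mul z)
    rw [show -I * z * (2 / (1 - z * ee t) ^ 2 * ee t) = 2 / (1 - z * ee t) ^ 2 * (z * (-I * ee t))
      from by ring]
    exact this
  have hu' : Continuous fun t => -I * z * (2 / (1 - z * ee t) ^ 2 * ee t) :=
    continuous_const.mul (dk_ee_cont hz)
  have hpi : (0:ℝ) ≤ 2 * π := by positivity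
  have key := ibp_aux hpi hφ hu hu'
  have hper : kk (z * ee (2 * π)) = kk (z * ee 0) := by
    have := ee_periodic 0
    rw [zero_add] at this
    rw [this]
  have e1 : ∫ t in (0:ℝ)..(2 * π), -I * z * (2 / (1 - z * ee t) ^ 2 * ee t) * Φ t
      = ∫ t in (0:ℝ)..(2 * π), -I * z * (2 / (1 - z * ee t) ^ 2 * ee t) *
          (∫ s in (0:ℝ)..t, φ s) := by
    have hz0 : ∫ t in (0:ℝ)..(2 * π), -I * z * (2 / (1 - z * ee t) ^ 2 * ee t) * c = 0 := by
      rw [intervalIntegral.integral_mul_const,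
        intervalIntegral.integral_eq_sub_of_hasDerivAt (fun x _ => hu x)
        (hu'.intervalIntegrable _ _), hper]
      simp
    have : ∀ t, -I * z * (2 / (1 - z * ee t) ^ 2 * ee t) * Φ t =
      -I * z * (2 / (1 - z * ee t) ^ 2 * ee t) * c + -I * z * (2 / (1 - z * ee t) ^ 2 * ee t) *
          (∫ s in (0:ℝ)..t, φ s) := by
      intro t; rw [hΦ]; ring
    simp_rw [this]
    rw [intervalIntegral.integral_add, hz0, zero_add]
    · exact (hu'.mul continuous_const).intervalIntegrable _ _
    · exact ((hu'.continuousOn).mul (intervalIntegral.continuousOn_primitive_interval'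
      hφ left_mem_uIcc)).intervalIntegrable
  have e2 : ∫ s in (0:ℝ)..(2 * π), (kk (z * ee (2 * π)) - kk (z * ee s)) * φ s =
      - ∫ s in (0:ℝ)..(2 * π), kk (z * ee s) * φ s := by
    simp_rw [sub_mul]
    rw [intervalIntegral.integral_sub (hφ.const_mul _)
      (hφ.continuousOn_mul (kk_ee_cont hz).continuousOn), intervalIntegral.integral_const_mul, h0]
    simp
  rw [← e1, e2] at key
  have e3 : ∫ t in (0:ℝ)..(2 * π), -I * z * (2 / (1 - z * ee t) ^ 2 * ee t) * Φ t =
     - (I * z) * ∫ t in (0:ℝ)..(2 * π), (2 / (1 - z * ee t) ^ 2 * ee t) * Φ t := by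
    rw [← intervalIntegral.integral_const_mul]
    congr 1; ext t; ring
  rw [e3] at key
  unfold herg
  linear_combination (-(1 / (2 * (π:ℂ)))) * key



lemma conj_intervalIntegral (f : ℝ → ℂ) (a b : ℝ) :
    (starRingEnd ℂ) (∫ t in a..b, f t) = ∫ t in a..b, (starRingEnd ℂ) (f t) := by
  simp only [intervalIntegral, map_sub, integral_conj]

lemma conj_intervalIntegrable {f : ℝ → ℂ} {a b : ℝ} (h : IntervalIntegrable f volume a b) :
    IntervalIntegrable (fun t => (starRingEnd ℂ) (f t)) volume a b := by
  rw [intervalIntegrable_iff] at h ⊢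
  exact (Complex.conjCLE.toContinuousLinearMap).integrable_comp h

lemma poissonKer_ofReal (z : ℂ) :
    (poissonKer z : ℂ) = (1 / 2) * (kk z + (starRingEnd ℂ) (kk z)) := by
  rw [poissonKer_eq_s1, Complex.add_conj]; push_cast; ring

lemma poissonIntR_eq {φ : ℝ → ℂ} (hφ : IntervalIntegrable φ volume 0 (2 * π)) {z : ℂ}
    (hz : ‖z‖ < 1) :
    poissonIntR φ z = (1 / 2) * (herg φ z +
      (starRingEnd ℂ) (herg (fun t => (starRingEnd ℂ) (φ t)) z)) := by
  have h1 := hφ.continuousOn_mul (kk_ee_cont hz).continuousOn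
  have h2 := conj_intervalIntegrable ((conj_intervalIntegrable hφ).continuousOn_mul
    (kk_ee_cont hz).continuousOn)
  have e : ∀ t : ℝ, (poissonKer (z * Complex.exp (-(t : ℂ) * Complex.I)) : ℂ) * φ t =
      (1 / 2) * (kk (z * ee t) * φ t +
        (starRingEnd ℂ) (kk (z * ee t) * (starRingEnd ℂ) (φ t))) := by
    intro t
    rw [poissonKer_ofReal, map_mul, Complex.conj_conj, ee]; ring
  unfold poissonIntR herg
  simp_rw [e]
  rw [intervalIntegral.integral_const_mul, intervalIntegral.integral_add h1 h2,
    ← conj_intervalIntegral]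
  rw [map_mul]
  have c2 : (starRingEnd ℂ) (2:ℂ) = 2 := map_ofNat _ 2
  simp [c2]
  ring

lemma poissonInt_eq_R (F : ℂ → ℂ) :
    poissonInt F = poissonIntR (fun t => F (Complex.exp ((t : ℂ) * Complex.I))) := rfl

lemma wd_aux {f A B : ℂ → ℂ} (hA : DifferentiableOn ℂ A (ball 0 1))
    (hB : DifferentiableOn ℂ B (ball 0 1))
    (hf : ∀ z ∈ ball (0:ℂ) 1, f z = (1 / 2) * (A z + (starRingEnd ℂ) (B z))) {z : ℂ}
    (hz : z ∈ ball (0:ℂ) 1) :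
    wdz f z = (1 / 2) * deriv A z ∧ (starRingEnd ℂ) (wdzb f z) = (1 / 2) * deriv B z := by
  have hn := isOpen_ball.mem_nhds hz
  have hA' := ((hA.differentiableAt hn).hasDerivAt.hasFDerivAt).restrictScalars ℝ
  have hB' := ((hB.differentiableAt hn).hasDerivAt.hasFDerivAt).restrictScalars ℝ
  have hB'' := (Complex.conjCLE.toContinuousLinearMap.hasFDerivAt (x := B z)).comp z hB'
  have hfe : f =ᶠ[𝓝 z] fun z => (1 / 2) * (A z + (starRingEnd ℂ) (B z)) := by
    filter_upwards [hn] with w hw using hf w hw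
  have h := ((hA'.add hB'').const_mul (1 / 2 : ℂ)).congr_of_eventuallyEq hfe
  have hfd := h.fderiv
  unfold wdz wdzb
  rw [hfd]
  constructor
  · simp
    ring_nf
    simp
    ring
  · have c2 : (starRingEnd ℂ) (2:ℂ) = 2 := map_ofNat _ 2
    simp [c2]
    ring_nf
    simp
    ring

lemma herg_wd {F : ℂ → ℂ} {Φ : ℝ → ℂ}
    (hΦ : ∀ t : ℝ, Φ t = F (Complex.exp ((t : ℂ) * Complex.I)))
    (hi : IntervalIntegrable Φ volume 0 (2 * π)) {z : ℂ} (hz : z ∈ ball (0:ℂ) 1) :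
    wdz (poissonInt F) z = (1 / 2) * deriv (herg Φ) z ∧
      (starRingEnd ℂ) (wdzb (poissonInt F) z) =
        (1 / 2) * deriv (herg (fun t => (starRingEnd ℂ) (Φ t))) z := by
  refine wd_aux (herg_diffOn hi) (herg_diffOn (conj_intervalIntegrable hi)) ?_ hz
  intro w hw
  rw [poissonInt_eq_R, ← (funext hΦ : Φ = _)]
  exact poissonIntR_eq hi (by simpa using hw)



lemma mker_deriv (y : ℝ) :
    HasDerivAt (fun y : ℝ => -(1 + y ^ 2)⁻¹) (2 * y / (1 + y ^ 2) ^ 2) y := by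
  have h : HasDerivAt (fun y : ℝ => 1 + y ^ 2) (2 * y) y := by
    simpa using (hasDerivAt_pow 2 y).const_add 1
  have := (h.inv (by positivity)).neg
  exact this.congr_deriv (by ring)

lemma mker_lim : Tendsto (fun y : ℝ => -(1 + y ^ 2)⁻¹) atTop (𝓝 0) := by
  have h : Tendsto (fun y : ℝ => 1 + y ^ 2) atTop atTop :=
    tendsto_atTop_add_const_left _ _ (tendsto_pow_atTop (by norm_num))
  simpa using h.inv_tendsto_atTop.neg

lemma mker_integrable : IntegrableOn (fun y : ℝ => 2 * y / (1 + y ^ 2) ^ 2) (Ioi 0) :=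
  integrableOn_Ioi_deriv_of_nonneg (mker_deriv 0).continuousAt.continuousWithinAt
    (fun x _ => mker_deriv x) (fun x hx => by have : (0:ℝ) < x := hx; positivity) mker_lim

lemma mker_integral {a : ℝ} (ha : 0 ≤ a) :
    ∫ y in Ioi a, 2 * y / (1 + y ^ 2) ^ 2 = (1 + a ^ 2)⁻¹ := by
  rw [integral_Ioi_of_hasDerivAt_of_nonneg' (fun x _ => mker_deriv x)
    (fun x hx => by have : (0:ℝ) < x := ha.trans_lt hx; positivity) mker_lim]
  simp

lemma layer {ψ : ℝ → ℝ} (hi : Integrable ψ) {δ : ℝ} (hδ : 0 < δ) :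
    ∫ s, δ / (δ ^ 2 + s ^ 2) * ψ s =
      ∫ y in Ioi (0:ℝ), 2 * y ^ 2 / (1 + y ^ 2) ^ 2 * ((∫ s in Icc (-(δ * y)) (δ * y), ψ s) / (δ * y)) := by
  set m : ℝ → ℝ := fun y => 2 * y / (1 + y ^ 2) ^ 2 with hm
  have hprod : Integrable (fun p : ℝ × ℝ => (ψ p.1) * m p.2)
      (volume.prod (volume.restrict (Ioi (0:ℝ)))) := Integrable.mul_prod hi mker_integrable
  have hS : MeasurableSet {p : ℝ × ℝ | |p.1| ≤ δ * p.2} :=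
    measurableSet_le (measurable_fst.abs) (measurable_snd.const_mul δ)
  have key := integral_integral_swap (f := fun s y => {p : ℝ × ℝ | |p.1| ≤ δ * p.2}.indicator
    (fun p : ℝ × ℝ => ψ p.1 * m p.2) (s, y)) (hprod.indicator hS)
  have e1 : ∀ s, ∫ y in Ioi (0:ℝ), {p : ℝ × ℝ | |p.1| ≤ δ * p.2}.indicator
      (fun p : ℝ × ℝ => ψ p.1 * m p.2) (s, y) = δ * (δ / (δ ^ 2 + s ^ 2) * ψ s) := by
    intro s
    have : (fun y => {p : ℝ × ℝ | |p.1| ≤ δ * p.2}.indicator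
      (fun p : ℝ × ℝ => ψ p.1 * m p.2) (s, y)) = (Ici (|s| / δ)).indicator
        (fun y => ψ s * m y) := by
      ext y
      simp only [indicator, mem_ofPred_eq, mem_Ici, div_le_iff₀' hδ]
    rw [this, setIntegral_indicator measurableSet_Ici]
    have h0 : 0 ≤ |s| / δ := by positivity
    have e2 : (Ioi (0:ℝ) ∩ Ici (|s| / δ) : Set ℝ) =ᵐ[volume] Ioi (|s| / δ) := by
      have a1 : (Ioi (0:ℝ) ∩ Ici (|s| / δ) : Set ℝ) =ᵐ[volume] (Ioi (0:ℝ) ∩ Ioi (|s| / δ) : Set ℝ) :=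
        (ae_eq_refl _).inter Ioi_ae_eq_Ici.symm
      have a2 : (Ioi (0:ℝ) ∩ Ioi (|s| / δ) : Set ℝ) = Ioi (|s| / δ) :=
        inter_eq_right.2 (Ioi_subset_Ioi h0)
      rwa [a2] at a1
    rw [setIntegral_congr_set e2, integral_const_mul, mker_integral h0, div_pow, sq_abs]
    field_simp
  have e3 : ∀ y ∈ Ioi (0:ℝ), ∫ s, {p : ℝ × ℝ | |p.1| ≤ δ * p.2}.indicator
      (fun p : ℝ × ℝ => ψ p.1 * m p.2) (s, y) =
      δ * (2 * y ^ 2 / (1 + y ^ 2) ^ 2 * ((∫ s in Icc (-(δ * y)) (δ * y), ψ s) / (δ * y))) := by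
    intro y hy
    have hy : 0 < y := hy
    have : (fun s => {p : ℝ × ℝ | |p.1| ≤ δ * p.2}.indicator
      (fun p : ℝ × ℝ => ψ p.1 * m p.2) (s, y)) = (Icc (-(δ * y)) (δ * y)).indicator
        (fun s => ψ s * m y) := by
      ext s
      simp only [indicator, mem_ofPred_eq, mem_Icc, abs_le]
    rw [this, integral_indicator measurableSet_Icc, integral_mul_const, hm]
    field_simp
  simp_rw [e1] at key
  rw [setIntegral_congr_fun measurableSet_Ioi e3, integral_const_mul, integral_const_mul] at key
  exact mul_left_cancel₀ hδ.ne' key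

lemma approx_id {ψ : ℝ → ℝ} (h0 : ∀ s, 0 ≤ ψ s) (hi : Integrable ψ)
    (hL : Tendsto (fun h => (∫ s in Icc (-h) h, ψ s) / h) (𝓝[>] 0) (𝓝 0)) :
    Tendsto (fun δ => ∫ s, δ / (δ ^ 2 + s ^ 2) * ψ s) (𝓝[>] 0) (𝓝 0) := by
  set Q : ℝ → ℝ := fun h => (∫ s in Icc (-h) h, ψ s) / h with hQ
  have hPn : ∀ h, 0 ≤ ∫ s in Icc (-h) h, ψ s := fun h => integral_nonneg h0
  have hPt : ∀ h, ∫ s in Icc (-h) h, ψ s ≤ ∫ s, ψ s := fun h =>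
    setIntegral_le_integral hi (Eventually.of_forall h0)
  obtain ⟨M, hM⟩ : ∃ M, ∀ h, 0 < h → |Q h| ≤ M := by
    have : ∀ᶠ h in 𝓝[>] (0:ℝ), Q h < 1 := hL.eventually_lt_const (by norm_num)
    obtain ⟨a, ha, haa⟩ := mem_nhdsGT_iff_exists_Ioo_subset.1 this
    have ha : (0:ℝ) < a := ha
    refine ⟨max 1 ((∫ s, ψ s) / a), fun h hh => ?_⟩
    rw [abs_of_nonneg (div_nonneg (hPn h) hh.le)]
    rcases lt_or_ge h a with h1 | h1
    · exact le_max_of_le_left (le_of_lt (haa ⟨hh, h1⟩))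
    · refine le_max_of_le_right ?_
      have := (hPn h).trans (hPt h)
      change (∫ s in Icc (-h) h, ψ s) / h ≤ _
      exact div_le_div₀ this (hPt h) ha h1
  have hmono : Monotone fun h => ∫ s in Icc (-h) h, ψ s := by
    intro a b hab
    refine setIntegral_mono_set hi.integrableOn (Eventually.of_forall h0) ?_
    exact (Icc_subset_Icc (neg_le_neg hab) hab).eventuallyLE
  have hmeas : Measurable Q := hmono.measurable.div measurable_id
  have key : Tendsto (fun δ => ∫ y in Ioi (0:ℝ), 2 * y ^ 2 / (1 + y ^ 2) ^ 2 * Q (δ * y))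
      (𝓝[>] 0) (𝓝 (∫ y in Ioi (0:ℝ), (0:ℝ))) := by
    refine tendsto_integral_filter_of_dominated_convergence (fun y => (2 * M) * (1 + y ^ 2)⁻¹)
      ?_ ?_ ?_ ?_
    · refine Eventually.of_forall fun δ => Measurable.aestronglyMeasurable ?_
      exact Measurable.mul (by fun_prop) (hmeas.comp (measurable_const_mul δ))
    · filter_upwards [self_mem_nhdsWithin] with δ hδ
      refine (ae_restrict_iff' measurableSet_Ioi).2 (Eventually.of_forall fun y hy => ?_)
      have h1 := hM (δ * y) (mul_pos hδ hy)
      have hM0 : 0 ≤ M := (abs_nonneg _).trans h1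
      rw [norm_mul, Real.norm_eq_abs, Real.norm_eq_abs, abs_of_nonneg (by positivity)]
      have h2 : 2 * y ^ 2 / (1 + y ^ 2) ^ 2 ≤ 2 * (1 + y ^ 2)⁻¹ := by
        rw [← div_eq_mul_inv, div_le_div_iff₀ (by positivity) (by positivity)]
        nlinarith [sq_nonneg y]
      calc _ ≤ 2 * (1 + y ^ 2)⁻¹ * M := by gcongr
        _ = _ := by ring
    · exact (integrable_inv_one_add_sq.const_mul _).integrableOn
    · refine (ae_restrict_iff' measurableSet_Ioi).2 (Eventually.of_forall fun y hy => ?_)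
      have hy : (0:ℝ) < y := hy
      have h1 : Tendsto (fun δ : ℝ => δ * y) (𝓝[>] 0) (𝓝[>] 0) := by
        refine tendsto_nhdsWithin_iff.2 ⟨?_, ?_⟩
        · have : Tendsto (fun δ : ℝ => δ * y) (𝓝 0) (𝓝 (0 * y)) := tendsto_id.mul_const y
          rw [zero_mul] at this
          exact this.mono_left nhdsWithin_le_nhds
        · filter_upwards [self_mem_nhdsWithin] with δ hδ
          exact mul_pos hδ hy
      simpa using (hL.comp h1).const_mul (2 * y ^ 2 / (1 + y ^ 2) ^ 2)
  simp only [integral_zero] at key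
  refine key.congr' ?_
  filter_upwards [self_mem_nhdsWithin] with δ hδ
  exact (layer hi hδ).symm



lemma kk_meas : Measurable kk := by unfold kk; fun_prop

lemma tan_kk (v : ℝ) (a : ℂ) :
    I * (a / (Real.tan (v / 2) : ℂ)) = kk (Complex.exp (v * I)) * a := by
  have e1 : Complex.exp (v * I) = Complex.exp ((v / 2 : ℝ) * I) * Complex.exp ((v / 2 : ℝ) * I) := by
    rw [← Complex.exp_add]; congr 1; push_cast; ring
  set b := Complex.exp ((v / 2 : ℝ) * I) with hb
  have hb0 : b ≠ 0 := Complex.exp_ne_zero _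
  have hbe : b = (Real.cos (v / 2) : ℂ) + (Real.sin (v / 2) : ℂ) * I := by
    rw [hb, Complex.exp_mul_I]; simp
  have hbi : b⁻¹ = (Real.cos (v / 2) : ℂ) - (Real.sin (v / 2) : ℂ) * I := by
    rw [hb, ← Complex.exp_neg, show -(((v / 2 : ℝ) : ℂ) * I) = (-((v / 2 : ℝ) : ℂ)) * I by ring,
      Complex.exp_mul_I, Complex.cos_neg, Complex.sin_neg]
    simp; ring
  have e2 : kk (b * b) = (b⁻¹ + b) / (b⁻¹ - b) := by
    unfold kk
    rw [← mul_div_mul_left (b⁻¹ + b) _ hb0, mul_add, mul_sub, mul_inv_cancel₀ hb0]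
  rw [e1, e2, hbi, hbe, Real.tan_eq_sin_div_cos]
  by_cases hs : (Real.sin (v / 2) : ℂ) = 0
  · rw [ofReal_div, hs]; simp
  push_cast at *
  have hI : -(2 * (Complex.sin (v/2)) * I) ≠ 0 := by simp [hs]
  rw [show (Complex.cos (v/2) - Complex.sin (v/2) * I - (Complex.cos (v/2) + Complex.sin (v/2) * I)) =
    -(2 * (Complex.sin (v/2)) * I) by ring]
  by_cases hc : Complex.cos (v/2) = 0
  · rw [hc]; simp
  field_simp
  ring_nf
  simp

lemma exp_lower {v : ℝ} (hv : |v| ≤ π) : 2 / π * |v| ≤ ‖1 - Complex.exp (v * I)‖ := by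
  rw [norm_sub_rev, mul_comm (v : ℂ) I, Complex.norm_exp_I_mul_ofReal_sub_one, norm_mul,
    Real.norm_eq_abs, Real.norm_eq_abs]
  have h := Real.mul_abs_le_abs_sin (x := v / 2) (by rw [abs_div]; simp; linarith)
  rw [abs_div] at h
  simp at h ⊢
  have e : 2 / π * |v| = 2 * (|v| / π) := by ring
  linarith

lemma ker_near {r v : ℝ} (hr0 : 0 < r) (hr : r < 1) (hv : |v| < 1 - r) :
    ‖kk (r * Complex.exp (v * I))‖ ≤ 2 * π ^ 2 * ((1 - r) / ((1 - r) ^ 2 + v ^ 2)) := by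
  have hn : ‖(r : ℂ) * Complex.exp (v * I)‖ = r := by
    rw [norm_mul, Complex.norm_exp_ofReal_mul_I, mul_one, Complex.norm_real, Real.norm_eq_abs,
      abs_of_pos hr0]
  have h := kk_bound (w := (r : ℂ) * Complex.exp (v * I)) (by rw [hn]; exact hr)
  rw [hn] at h
  refine h.trans ?_
  have hd : 0 < 1 - r := by linarith
  have hv2 : v ^ 2 ≤ (1 - r) ^ 2 := sq_le_sq' (by linarith [(abs_lt.1 hv).1]) (abs_lt.1 hv).2.le
  have hpi : 2 ≤ π ^ 2 := by nlinarith [Real.pi_gt_three]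
  rw [← mul_div_assoc, div_le_div_iff₀ hd (by positivity)]
  nlinarith [sq_nonneg (1 - r)]

lemma ker_far {r v : ℝ} (hr0 : 0 < r) (hr : r < 1) (hv : 1 - r ≤ |v|) (hvpi : |v| ≤ π) :
    ‖kk (r * Complex.exp (v * I)) - kk (Complex.exp (v * I))‖ ≤
      2 * π ^ 2 * ((1 - r) / ((1 - r) ^ 2 + v ^ 2)) := by
  have hd : 0 < 1 - r := by linarith
  set b := Complex.exp (v * I) with hb
  have hbn : ‖b‖ = 1 := Complex.norm_exp_ofReal_mul_I v
  have hn : ‖(r : ℂ) * b‖ = r := by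
    rw [norm_mul, hbn, mul_one, Complex.norm_real, Real.norm_eq_abs, abs_of_pos hr0]
  have hv0 : 0 < |v| := by linarith
  have h1 := exp_lower hvpi
  rw [← hb] at h1
  have hpi := Real.pi_pos
  have h1p : 0 < ‖1 - b‖ := lt_of_lt_of_le (by positivity) h1
  have h2 : ‖1 - b‖ ≤ 2 * ‖1 - r * b‖ := by
    have e : 1 - b = (1 - r * b) - ((1 - r : ℝ) : ℂ) * b := by push_cast; ring
    have a := norm_sub_le (1 - r * b) (((1 - r : ℝ) : ℂ) * b)
    rw [← e, norm_mul, hbn, Complex.norm_real, Real.norm_eq_abs, abs_of_pos hd] at a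
    have a2 := one_sub_norm_le ((r : ℂ) * b)
    rw [hn] at a2
    linarith
  have h3 : 1 / π * |v| ≤ ‖1 - r * b‖ := by
    have : 2 / π * |v| = 2 * (1 / π * |v|) := by ring
    linarith
  have n1 : 1 - b ≠ 0 := norm_pos_iff.1 h1p
  have n2 : 1 - (r : ℂ) * b ≠ 0 := one_sub_ne (by rw [hn]; exact hr)
  have e : kk (r * b) - kk b = -(2 * ((1 - r : ℝ) : ℂ) * b) / ((1 - r * b) * (1 - b)) := by
    unfold kk
    field_simp
    push_cast
    ring
  rw [e, norm_div, norm_neg, norm_mul, norm_mul, norm_mul, hbn, Complex.norm_real,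
    Real.norm_eq_abs, abs_of_pos hd]
  have hq : v ^ 2 = |v| ^ 2 := (sq_abs v).symm
  rw [hq]
  set w := |v|
  calc _ ≤ ‖(2:ℂ)‖ * (1 - r) * 1 / ((1 / π * w) * (2 / π * w)) := by gcongr
    _ = π ^ 2 * (1 - r) / w ^ 2 := by simp; field_simp
    _ ≤ _ := by
      rw [← mul_div_assoc, div_le_div_iff₀ (by positivity) (by positivity)]
      have : (1 - r) ^ 2 ≤ w ^ 2 := by gcongr
      have : 0 ≤ π ^ 2 * (1 - r) := by positivity
      nlinarith

lemma exp_ee (θ t : ℝ) (r : ℝ) :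
    (r : ℂ) * Complex.exp (θ * I) * ee t = r * Complex.exp (((θ - t : ℝ) : ℂ) * I) := by
  rw [ee, mul_assoc, ← Complex.exp_add]; congr 2; push_cast; ring

lemma herg_shift {φ : ℝ → ℂ} (hp : Function.Periodic φ (2 * π)) (θ r : ℝ) :
    herg φ (r * Complex.exp (θ * I)) = (1 / (2 * π)) *
      ∫ t in Ioo (θ - π) (θ + π), kk (r * Complex.exp (((θ - t : ℝ) : ℂ) * I)) * φ t := by
  unfold herg
  have hper : Function.Periodic (fun t => kk (r * Complex.exp (θ * I) * ee t) * φ t) (2 * π) := by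
    intro t
    simp only [ee_periodic t, hp t]
  have h := hper.intervalIntegral_add_eq 0 (θ - π)
  rw [zero_add] at h
  rw [h, show θ - π + 2 * π = θ + π by ring, intervalIntegral.integral_of_le
    (by linarith [Real.pi_pos]), integral_Ioc_eq_integral_Ioo]
  simp_rw [exp_ee]

lemma herg_one {z : ℂ} (hz : ‖z‖ < 1) : herg (fun _ => 1) z = 1 := by
  have hD : DifferentiableOn ℂ (fun w => kk (z * w)) (closedBall 0 1) := by
    intro w hw
    have hw : ‖w‖ ≤ 1 := by simpa using hw
    have : ‖z * w‖ < 1 := by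
      rw [norm_mul]; nlinarith [norm_nonneg z, norm_nonneg w]
    exact ((kk_hasDerivAt this).differentiableAt.comp w
      (by fun_prop : DifferentiableAt ℂ (fun w => z * w) w)).differentiableWithinAt
  have h := (DiffContOnCl.circleAverage (f := fun w => kk (z * w)) (c := 0) (R := 1)
    (DifferentiableOn.diffContOnCl (by rw [abs_one, closure_ball _ one_ne_zero]; exact hD)))
  rw [Real.circleAverage_def] at h
  have e : kk (z * 0) = 1 := by simp [kk]
  rw [e] at h
  refine Eq.trans ?_ h
  unfold herg
  have s : ∫ t in (0:ℝ)..(2 * π), kk (z * ee t) * 1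
      = ∫ t in (0:ℝ)..(2 * π), kk (z * circleMap 0 1 t) := by
    have h1 : ∀ t : ℝ, kk (z * ee t) * 1 = (fun t : ℝ => kk (z * circleMap 0 1 t)) (-t) := by
      intro t
      simp [ee, circleMap]
    simp_rw [h1]
    rw [intervalIntegral.integral_comp_neg (fun t : ℝ => kk (z * circleMap 0 1 t))]
    have hper : Function.Periodic (fun t : ℝ => kk (z * circleMap 0 1 t)) (2 * π) := by
      intro t
      simp only [periodic_circleMap 0 1 t]
    have := hper.intervalIntegral_add_eq (-(2 * π)) 0
    simpa using this
  rw [s, Complex.real_smul]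
  simp

lemma kk_exp_neg (v : ℝ) :
    kk (Complex.exp (((-v : ℝ) : ℂ) * I)) = -kk (Complex.exp (v * I)) := by
  have : Complex.exp (((-v : ℝ) : ℂ) * I) = (Complex.exp (v * I))⁻¹ := by
    rw [← Complex.exp_neg]; push_cast; ring_nf
  rw [this]
  set b := Complex.exp (v * I)
  have hb0 : b ≠ 0 := Complex.exp_ne_zero _
  unfold kk
  rw [← mul_div_mul_left _ _ hb0, mul_add, mul_sub, mul_inv_cancel₀ hb0, mul_one,
    ← neg_sub 1 b, div_neg, add_comm]



/-- truncated interval -/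
def SS (θ ε : ℝ) : Set ℝ := Ioo (θ - π) (θ + π) \ Ioo (θ - ε) (θ + ε)

lemma SS_meas (θ ε : ℝ) : MeasurableSet (SS θ ε) := measurableSet_Ioo.diff measurableSet_Ioo

lemma SS_sub (θ ε : ℝ) : SS θ ε ⊆ Ioo (θ - π) (θ + π) := diff_subset

lemma SS_abs {θ ε t : ℝ} (h : t ∈ SS θ ε) : ε ≤ |θ - t| ∧ |θ - t| ≤ π := by
  obtain ⟨h1, h2⟩ := h
  constructor
  · by_contra hc
    push Not at hc
    rw [abs_lt] at hc
    exact h2 ⟨by linarith, by linarith⟩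
  · rw [abs_le]; exact ⟨by linarith [h1.2], by linarith [h1.1]⟩

lemma SS_cot_bound {θ ε t : ℝ} (hε : 0 < ε) (h : t ∈ SS θ ε) :
    ‖kk (Complex.exp (((θ - t : ℝ) : ℂ) * I))‖ ≤ π / ε := by
  obtain ⟨h1, h2⟩ := SS_abs h
  have h3 := exp_lower h2
  have hpi := Real.pi_pos
  have h4 : 0 < 2 / π * ε := by positivity
  have h5 : 2 / π * ε ≤ 2 / π * |θ - t| := by gcongr
  unfold kk
  rw [norm_div]
  have : ‖1 + Complex.exp (((θ - t : ℝ) : ℂ) * I)‖ ≤ 2 := by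
    refine (norm_add_le _ _).trans ?_
    rw [Complex.norm_exp_ofReal_mul_I]; norm_num
  calc _ ≤ 2 / (2 / π * ε) := by
        gcongr
        linarith
    _ = π / ε := by field_simp

lemma SS_cot_meas (θ : ℝ) :
    Measurable fun t : ℝ => kk (Complex.exp (((θ - t : ℝ) : ℂ) * I)) :=
  kk_meas.comp (by fun_prop)

lemma SS_integrable {φ : ℝ → ℂ} {θ ε : ℝ} (hε : 0 < ε)
    (hφ : IntegrableOn φ (Ioo (θ - π) (θ + π))) :
    IntegrableOn (fun t => kk (Complex.exp (((θ - t : ℝ) : ℂ) * I)) * φ t) (SS θ ε) := by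
  refine Integrable.bdd_mul (c := π / ε) (hφ.mono_set (SS_sub θ ε))
    (SS_cot_meas θ).aestronglyMeasurable ?_
  exact (ae_restrict_iff' (SS_meas θ ε)).2 (Eventually.of_forall fun t ht => SS_cot_bound hε ht)

lemma SS_odd (θ ε : ℝ) :
    ∫ t in SS θ ε, kk (Complex.exp (((θ - t : ℝ) : ℂ) * I)) = 0 := by
  rw [← integral_indicator (SS_meas θ ε)]
  set f := (SS θ ε).indicator (fun t : ℝ => kk (Complex.exp (((θ - t : ℝ) : ℂ) * I))) with hf
  have h1 := integral_sub_left_eq_self f volume (2 * θ)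
  have h2 : ∀ t, f (2 * θ - t) = - f t := by
    intro t
    have hmem : 2 * θ - t ∈ SS θ ε ↔ t ∈ SS θ ε := by
      simp only [SS, mem_diff, mem_Ioo]
      constructor
      · rintro ⟨⟨a, b⟩, c⟩
        exact ⟨⟨by linarith, by linarith⟩, fun h => c ⟨by linarith [h.2], by linarith [h.1]⟩⟩
      · rintro ⟨⟨a, b⟩, c⟩
        exact ⟨⟨by linarith, by linarith⟩, fun h => c ⟨by linarith [h.2], by linarith [h.1]⟩⟩
    by_cases ht : t ∈ SS θ ε
    · rw [hf, indicator_of_mem (hmem.2 ht), indicator_of_mem ht, ← kk_exp_neg]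
      congr 4; ring
    · rw [hf, indicator_of_notMem (fun h => ht (hmem.1 h)), indicator_of_notMem ht, neg_zero]
  simp_rw [h2] at h1
  rw [integral_neg] at h1
  have : (2:ℂ) * ∫ t, f t = 0 := by linear_combination -h1
  simpa using this

lemma radial_est {φ : ℝ → ℂ} (hp : Function.Periodic φ (2 * π))
    (hφ : LocallyIntegrable φ) {θ r : ℝ} (hr0 : 0 < r) (hr : r < 1) (hrp : 1 - r < π) :
    ‖herg φ (r * Complex.exp (θ * I)) - φ θ - I * ((1 / (2 * π)) *
      ∫ t in SS θ (1 - r), φ t / (Real.tan ((θ - t) / 2) : ℂ))‖ ≤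
      π * ∫ s, (1 - r) / ((1 - r) ^ 2 + s ^ 2) *
        (Ioo (-π) π).indicator (fun s => ‖φ (θ + s) - φ θ‖) s := by
  have hpi := Real.pi_pos
  have hd : 0 < 1 - r := by linarith
  set A := Ioo (θ - π) (θ + π) with hA
  have hAm : MeasurableSet A := measurableSet_Ioo
  have hφA : IntegrableOn φ A :=
    (hφ.integrableOn_isCompact isCompact_Icc).mono_set Ioo_subset_Icc_self
  have hcA : IntegrableOn (fun _ : ℝ => φ θ) A := by
    rw [hA]; exact integrableOn_const (by simp)
  have hψA : IntegrableOn (fun t => φ t - φ θ) A := hφA.sub hcA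
  set K : ℝ → ℂ := fun t => kk (r * Complex.exp (((θ - t : ℝ) : ℂ) * I)) with hK
  set C : ℝ → ℂ := fun t => kk (Complex.exp (((θ - t : ℝ) : ℂ) * I)) with hC
  have hKm : Measurable K := kk_meas.comp (by fun_prop)
  have hrn : ∀ v : ℝ, ‖(r : ℂ) * Complex.exp (v * I)‖ = r := fun v => by
    rw [norm_mul, Complex.norm_exp_ofReal_mul_I, mul_one, Complex.norm_real, Real.norm_eq_abs,
      abs_of_pos hr0]
  have hKb : ∀ t, ‖K t‖ ≤ 2 / (1 - r) := by
    intro t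
    have := kk_bound (w := r * Complex.exp (((θ - t : ℝ) : ℂ) * I)) (by rw [hrn]; exact hr)
    rwa [hrn] at this
  have hKi : ∀ {g : ℝ → ℂ}, IntegrableOn g A → IntegrableOn (fun t => K t * g t) A := by
    intro g hg
    exact Integrable.bdd_mul hg hKm.aestronglyMeasurable (Eventually.of_forall hKb)
  have hK1 : (1 / (2 * π)) * ∫ t in A, K t = (1:ℂ) := by
    have h1 := herg_shift (φ := fun _ => 1) (fun _ => rfl) θ r
    rw [herg_one (by rw [hrn]; exact hr)] at h1
    simp only [mul_one] at h1
    exact h1.symm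
  have e1 : herg φ (r * Complex.exp (θ * I)) - φ θ = (1 / (2 * π)) * ∫ t in A, K t * (φ t - φ θ) := by
    rw [herg_shift hp]
    simp_rw [mul_sub]
    rw [integral_sub (hKi hφA) (hKi hcA), integral_mul_const, mul_sub, ← mul_assoc, hK1, one_mul]
  have e2 : I * ((1 / (2 * π)) * ∫ t in SS θ (1 - r), φ t / (Real.tan ((θ - t) / 2) : ℂ)) =
      (1 / (2 * π)) * ∫ t in A, (SS θ (1 - r)).indicator (fun t => C t * (φ t - φ θ)) t := by
    rw [setIntegral_indicator (SS_meas _ _), inter_eq_right.2 (SS_sub θ (1 - r)), mul_left_comm,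
      ← integral_const_mul]
    simp_rw [tan_kk]
    congr 1
    simp_rw [mul_sub]
    rw [integral_sub (SS_integrable hd hφA) (SS_integrable hd hcA), integral_mul_const,
      SS_odd, zero_mul, sub_zero]
  have hCi : IntegrableOn ((SS θ (1 - r)).indicator (fun t => C t * (φ t - φ θ))) A := by
    have : IntegrableOn (fun t => C t * (φ t - φ θ)) (SS θ (1 - r)) := SS_integrable hd hψA
    exact ((integrable_indicator_iff (SS_meas _ _)).2 this).integrableOn
  rw [e1, e2, ← mul_sub, ← integral_sub (hKi hψA) hCi, norm_mul]
  have hb : ∀ t ∈ A, ‖K t * (φ t - φ θ) - (SS θ (1 - r)).indicator (fun t => C t * (φ t - φ θ)) t‖ ≤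
      2 * π ^ 2 * ((1 - r) / ((1 - r) ^ 2 + (θ - t) ^ 2)) * ‖φ t - φ θ‖ := by
    intro t ht
    by_cases hs : t ∈ SS θ (1 - r)
    · rw [indicator_of_mem hs, ← sub_mul, norm_mul]
      gcongr
      exact ker_far hr0 hr (SS_abs hs).1 (SS_abs hs).2
    · rw [indicator_of_notMem hs, sub_zero, norm_mul]
      gcongr
      refine ker_near hr0 hr ?_
      have : t ∈ Ioo (θ - (1 - r)) (θ + (1 - r)) := by
        by_contra hc; exact hs ⟨ht, hc⟩
      rw [abs_lt]; exact ⟨by linarith [this.2], by linarith [this.1]⟩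
  have hKr : ∀ t, (1 - r) / ((1 - r) ^ 2 + (θ - t) ^ 2) ≤ 1 / (1 - r) := by
    intro t
    rw [div_le_div_iff₀ (by positivity) hd]
    nlinarith [sq_nonneg (θ - t)]
  have hint : IntegrableOn (fun t => 2 * π ^ 2 * ((1 - r) / ((1 - r) ^ 2 + (θ - t) ^ 2)) *
      ‖φ t - φ θ‖) A := by
    refine Integrable.bdd_mul (c := 2 * π ^ 2 * (1 / (1 - r))) hψA.norm ?_ ?_
    · exact Measurable.aestronglyMeasurable (by fun_prop)
    · refine Eventually.of_forall fun t => ?_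
      rw [Real.norm_eq_abs, abs_of_nonneg (by positivity)]
      exact mul_le_mul_of_nonneg_left (hKr t) (by positivity)
  have h3 := norm_integral_le_of_norm_le hint ((ae_restrict_iff' hAm).2 (Eventually.of_forall hb))
  have e4 : ∫ t in A, 2 * π ^ 2 * ((1 - r) / ((1 - r) ^ 2 + (θ - t) ^ 2)) * ‖φ t - φ θ‖ =
      2 * π ^ 2 * ∫ s, (1 - r) / ((1 - r) ^ 2 + s ^ 2) *
        (Ioo (-π) π).indicator (fun s => ‖φ (θ + s) - φ θ‖) s := by
    rw [← integral_indicator hAm, ← integral_const_mul,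
      ← integral_add_left_eq_self _ θ]
    congr 1
    ext s
    have : θ + s ∈ A ↔ s ∈ Ioo (-π) π := by
      rw [hA, mem_Ioo, mem_Ioo]
      constructor
      · rintro ⟨a, b⟩; exact ⟨by linarith, by linarith⟩
      · rintro ⟨a, b⟩; exact ⟨by linarith, by linarith⟩
    by_cases hs : s ∈ Ioo (-π) π
    · rw [indicator_of_mem (this.2 hs), indicator_of_mem hs]; ring
    · rw [indicator_of_notMem (fun h => hs (this.1 h)), indicator_of_notMem hs]; ring
  rw [e4] at h3
  have e5 : ‖(1 / (2 * π) : ℂ)‖ = 1 / (2 * π) := by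
    rw [norm_div, norm_mul, Complex.norm_real, Real.norm_eq_abs, abs_of_pos hpi]; simp
  rw [e5]
  refine (mul_le_mul_of_nonneg_left h3 (by positivity : 0 ≤ 1 / (2 * π))).trans (le_of_eq ?_)
  generalize (∫ s, (1 - r) / ((1 - r) ^ 2 + s ^ 2) *
        (Ioo (-π) π).indicator (fun s => ‖φ (θ + s) - φ θ‖) s) = J
  field_simp

lemma radial_lim {φ : ℝ → ℂ} (hp : Function.Periodic φ (2 * π))
    (hφ : LocallyIntegrable φ) {θ : ℝ} {L : ℂ}
    (hθ : Tendsto (fun h => ⨍ y in closedBall θ h, ‖φ y - φ θ‖) (𝓝[>] 0) (𝓝 0))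
    (hL : IsPVHilbert φ θ L) :
    Tendsto (fun r : ℝ => herg φ (r * Complex.exp (θ * I))) (𝓝[<] 1) (𝓝 (φ θ + I * L)) := by
  have hpi := Real.pi_pos
  set ψ : ℝ → ℝ := (Ioo (-π) π).indicator (fun s => ‖φ (θ + s) - φ θ‖) with hψ
  have h0 : ∀ s, 0 ≤ ψ s := fun s => indicator_nonneg (fun _ _ => norm_nonneg _) s
  have hi : Integrable ψ := by
    rw [hψ, integrable_indicator_iff measurableSet_Ioo]
    have h1 : IntegrableOn (fun y => ‖φ y - φ θ‖) (Icc (θ - π) (θ + π)) :=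
      ((hφ.integrableOn_isCompact isCompact_Icc).sub (integrableOn_const (by simp))).norm
    have h2 : IntegrableOn (fun s => ‖φ (θ + s) - φ θ‖) (Icc (-π) π) := by
      have := (measurePreserving_add_left volume θ).integrableOn_comp_preimage
        (measurableEmbedding_addLeft θ) (f := fun y => ‖φ y - φ θ‖) (s := Icc (θ - π) (θ + π))
      have h3 := this.2 h1
      have e : (fun x => θ + x) ⁻¹' Icc (θ - π) (θ + π) = Icc (-π) π := by
        ext x; simp only [mem_preimage, mem_Icc]
        constructor
        · rintro ⟨a, b⟩; exact ⟨by linarith, by linarith⟩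
        · rintro ⟨a, b⟩; exact ⟨by linarith, by linarith⟩
      rw [e] at h3
      exact h3
    exact h2.mono_set Ioo_subset_Icc_self
  have hLeb : Tendsto (fun h => (∫ s in Icc (-h) h, ψ s) / h) (𝓝[>] 0) (𝓝 0) := by
    have h2 := hθ.const_mul 2
    rw [mul_zero] at h2
    refine h2.congr' ?_
    have hlt : ∀ᶠ h in 𝓝[>] (0:ℝ), h < π :=
      (eventually_lt_nhds hpi).filter_mono nhdsWithin_le_nhds
    filter_upwards [self_mem_nhdsWithin, hlt] with h hh hhp
    have hh : 0 < h := hh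
    rw [setAverage_eq, measureReal_def, Real.volume_closedBall,
      ENNReal.toReal_ofReal (by positivity), smul_eq_mul, Real.closedBall_eq_Icc]
    have e : ∫ y in Icc (θ - h) (θ + h), ‖φ y - φ θ‖ = ∫ s in Icc (-h) h, ψ s := by
      rw [← integral_indicator measurableSet_Icc, ← integral_indicator measurableSet_Icc,
        ← integral_add_left_eq_self _ θ]
      congr 1
      ext s
      have : θ + s ∈ Icc (θ - h) (θ + h) ↔ s ∈ Icc (-h) h := by
        rw [mem_Icc, mem_Icc]
        constructor
        · rintro ⟨a, b⟩; exact ⟨by linarith, by linarith⟩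
        · rintro ⟨a, b⟩; exact ⟨by linarith, by linarith⟩
      by_cases hs : s ∈ Icc (-h) h
      · rw [indicator_of_mem (this.2 hs), indicator_of_mem hs, hψ, indicator_of_mem]
        exact ⟨by linarith [hs.1], by linarith [hs.2]⟩
      · rw [indicator_of_notMem (fun h => hs (this.1 h)), indicator_of_notMem hs]
    rw [e]
    field_simp
  have hA := approx_id h0 hi hLeb
  have hsub : Tendsto (fun r : ℝ => 1 - r) (𝓝[<] 1) (𝓝[>] 0) := by
    refine tendsto_nhdsWithin_iff.2 ⟨?_, ?_⟩
    · have : Tendsto (fun r : ℝ => 1 - r) (𝓝 1) (𝓝 (1 - 1)) := tendsto_const_nhds.sub tendsto_id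
      rw [sub_self] at this
      exact this.mono_left nhdsWithin_le_nhds
    · filter_upwards [self_mem_nhdsWithin] with r hr
      have : r < 1 := hr
      change 0 < 1 - r
      linarith
  have hA' := (hA.comp hsub).const_mul π
  rw [mul_zero] at hA'
  have hE : Tendsto (fun r : ℝ => herg φ (r * Complex.exp (θ * I)) - φ θ - I * ((1 / (2 * π)) *
      ∫ t in SS θ (1 - r), φ t / (Real.tan ((θ - t) / 2) : ℂ))) (𝓝[<] 1) (𝓝 0) := by
    refine squeeze_zero_norm' ?_ hA'
    have hgt : ∀ᶠ r in 𝓝[<] (1:ℝ), 0 < r :=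
      (eventually_gt_nhds one_pos).filter_mono nhdsWithin_le_nhds
    filter_upwards [self_mem_nhdsWithin, hgt] with r hr hr0
    exact radial_est hp hφ hr0 hr (by linarith [Real.pi_gt_three])
  have hP := (hL.comp hsub).const_mul I
  have := (hE.add hP).add_const (φ θ)
  rw [zero_add, add_comm (I * L)] at this
  refine this.congr fun r => ?_
  simp only [Function.comp, SS]
  ring



lemma pk_cont {z : ℂ} (hz : ‖z‖ < 1) :
    Continuous fun t : ℝ => poissonKer (z * Complex.exp (-(t : ℂ) * Complex.I)) := by
  simp only [poissonKer_eq_s1]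
  exact Complex.continuous_re.comp (kk_ee_cont hz)

lemma pk_bound {z : ℂ} (hz : ‖z‖ < 1) (t : ℝ) :
    ‖(poissonKer (z * Complex.exp (-(t : ℂ) * Complex.I)) : ℂ)‖ ≤ 2 / (1 - ‖z‖) := by
  rw [poissonKer_eq_s1, Complex.norm_real]
  refine (Complex.abs_re_le_norm _).trans ?_
  have h := norm_mul_ee z t
  have := kk_bound (w := z * ee t) (by rwa [h])
  rw [h] at this
  exact this

lemma poissonIntR_dct {ι : Type*} {l : Filter ι} [l.IsCountablyGenerated] {z : ℂ} (hz : ‖z‖ < 1)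
    {Fn : ι → ℝ → ℂ} {f : ℝ → ℂ} {b : ℝ → ℝ}
    (hm : ∀ᶠ n in l, AEStronglyMeasurable (Fn n) (volume.restrict (Ioc (0:ℝ) (2 * π))))
    (hb : IntervalIntegrable b volume 0 (2 * π))
    (hle : ∀ᶠ n in l, ∀ᵐ t, t ∈ Ioc (0:ℝ) (2 * π) → ‖Fn n t‖ ≤ b t)
    (hlim : ∀ᵐ t, t ∈ Ioc (0:ℝ) (2 * π) → Tendsto (fun n => Fn n t) l (𝓝 (f t))) :
    Tendsto (fun n => poissonIntR (Fn n) z) l (𝓝 (poissonIntR f z)) := by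
  have hpi := Real.two_pi_pos.le
  have hu : uIoc (0:ℝ) (2 * π) = Ioc 0 (2 * π) := uIoc_of_le hpi
  unfold poissonIntR
  refine Tendsto.const_mul _ ?_
  refine intervalIntegral.tendsto_integral_filter_of_dominated_convergence
    (fun t => 2 / (1 - ‖z‖) * b t) ?_ ?_ (hb.const_mul _) ?_
  · filter_upwards [hm] with n hn
    rw [hu]
    exact (Complex.continuous_ofReal.comp (pk_cont hz)).aestronglyMeasurable.mul hn
  · filter_upwards [hle] with n hn
    rw [hu]
    filter_upwards [hn] with t ht hti
    rw [norm_mul]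
    have h1 := pk_bound hz t
    exact mul_le_mul h1 (ht hti) (norm_nonneg _) ((norm_nonneg _).trans h1)
  · rw [hu]
    filter_upwards [hlim] with t ht hti
    exact (ht hti).const_mul _

lemma pInt_integrable {z : ℂ} (hz : ‖z‖ < 1) {g : ℝ → ℂ}
    (hg : IntervalIntegrable g volume 0 (2 * π)) :
    IntervalIntegrable (fun t : ℝ => (poissonKer (z * Complex.exp (-(t : ℂ) * Complex.I)) : ℂ) *
      g t) volume 0 (2 * π) :=
  hg.continuousOn_mul (Complex.continuous_ofReal.comp (pk_cont hz)).continuousOn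

lemma poissonIntR_add {z : ℂ} (hz : ‖z‖ < 1) {g h : ℝ → ℂ}
    (hg : IntervalIntegrable g volume 0 (2 * π)) (hh : IntervalIntegrable h volume 0 (2 * π)) :
    poissonIntR (fun t => g t + h t) z = poissonIntR g z + poissonIntR h z := by
  unfold poissonIntR
  rw [← mul_add, ← intervalIntegral.integral_add (pInt_integrable hz hg) (pInt_integrable hz hh)]
  congr 2
  ext t
  ring

lemma circ_mem {r : ℝ} (h0 : 0 < r) (h1 : r < 1) {z : ℂ} (hz : ‖z‖ ≤ 1) :
    (r : ℂ) * z ∈ ball (0:ℂ) 1 := by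
  rw [mem_ball_zero_iff, norm_mul, Complex.norm_real, Real.norm_eq_abs, abs_of_pos h0]
  nlinarith [norm_nonneg z]

lemma circ_mem' {r : ℝ} (h0 : 0 < r) (h1 : r < 1) (t : ℝ) :
    (r : ℂ) * Complex.exp (t * I) ∈ ball (0:ℂ) 1 :=
  circ_mem h0 h1 (by rw [Complex.norm_exp_ofReal_mul_I])

lemma circ_cont {H : ℂ → ℂ} (hH : ContinuousOn H (ball 0 1)) {r : ℝ} (h0 : 0 < r) (h1 : r < 1) :
    Continuous fun t : ℝ => H (r * Complex.exp (t * I)) :=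
  hH.comp_continuous (by fun_prop) (circ_mem' h0 h1)

lemma dil_diff {H : ℂ → ℂ} (hH : DifferentiableOn ℂ H (ball 0 1)) {r : ℝ} (h0 : 0 < r)
    (h1 : r < 1) : DiffContOnCl ℂ (fun w => H (r * w)) (ball 0 1) := by
  have : DifferentiableOn ℂ (fun w => H (r * w)) (closedBall 0 1) := by
    refine hH.comp (f := fun w => (r:ℂ) * w) (by fun_prop) ?_
    intro w hw
    exact circ_mem h0 h1 (by simpa using hw)
  refine DifferentiableOn.diffContOnCl ?_
  rwa [closure_ball _ one_ne_zero]

lemma poisson_formula {H : ℂ → ℂ} (hH : DifferentiableOn ℂ H (ball 0 1)) {r : ℝ} (h0 : 0 < r)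
    (h1 : r < 1) {z : ℂ} (hz : ‖z‖ < 1) :
    H (r * z) = poissonIntR (fun t => H (r * Complex.exp (t * I))) z := by
  have h := (dil_diff hH h0 h1).circleAverage_re_herglotzRieszKernel_smul' (w := z) (by simpa using hz)
  rw [← h, Real.circleAverage_def, poissonIntR]
  simp only [circleMap, sub_zero, zero_add, Complex.ofReal_one, one_mul]
  rw [Complex.real_smul]
  congr 1
  · push_cast; simp
  · congr 1
    ext t
    rw [Complex.real_smul, poissonKer_eq_s1, kk]
    have e : Complex.exp (-(t:ℂ) * I) = (Complex.exp (t * I))⁻¹ := by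
      rw [← Complex.exp_neg]; ring_nf
    have hne := Complex.exp_ne_zero (t * I)
    have hd : 1 - z * Complex.exp (-(t : ℂ) * I) ≠ 0 := one_sub_ne (by
      have := norm_mul_ee z t
      unfold ee at this
      rwa [this])
    rw [e] at hd ⊢
    have : (1 + z * (Complex.exp (t * I))⁻¹) / (1 - z * (Complex.exp (t * I))⁻¹) =
       (Complex.exp (t * I) + z) / (Complex.exp (t * I) - z) := by
      rw [← mul_div_mul_left _ _ hne]
      congr 1
      · field_simp
      · field_simp
    rw [this]

lemma mean_value {H : ℂ → ℂ} (hH : DifferentiableOn ℂ H (ball 0 1)) {r : ℝ} (h0 : 0 < r)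
    (h1 : r < 1) : ∫ t in (0:ℝ)..(2 * π), H (r * Complex.exp (t * I)) = 2 * π * H 0 := by
  have h := DiffContOnCl.circleAverage (R := 1) (c := 0) (by simpa using dil_diff hH h0 h1)
  rw [Real.circleAverage_def] at h
  simp only [circleMap, zero_add, Complex.ofReal_one, one_mul, mul_zero] at h
  rw [← h, Complex.real_smul]
  have : (π : ℂ) ≠ 0 := by simp
  generalize ∫ t in (0:ℝ)..(2 * π), H (r * Complex.exp (t * I)) = J
  push_cast
  field_simp

section W
variable {w : ℂ} {ε : ℝ}

lemma inv_aux {v : ℂ} (hv : 1 ≤ v.re) : v ≠ 0 ∧ ‖v⁻¹‖ ≤ 1 ∧ ‖v⁻¹‖ ^ 2 ≤ (v⁻¹).re ∧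
    ‖1 - v⁻¹‖ ^ 2 ≤ 1 - (v⁻¹).re := by
  have hv0 : v ≠ 0 := by rintro rfl; simp at hv; linarith
  have hn : 1 ≤ ‖v‖ := hv.trans (Complex.re_le_norm v)
  have h2 : ‖v⁻¹‖ ^ 2 ≤ (v⁻¹).re := by
    rw [Complex.inv_re, norm_inv, inv_pow, ← Complex.normSq_eq_norm_sq, inv_eq_one_div]
    have := Complex.normSq_pos.2 hv0
    gcongr
  refine ⟨hv0, ?_, h2, ?_⟩
  · rw [norm_inv]; exact inv_le_one_of_one_le₀ hn
  · rw [← Complex.normSq_eq_norm_sq, Complex.normSq_sub] at *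
    simp
    simp at h2
    linarith

lemma inv_aux2 (hw : 0 ≤ w.re) (hε : 0 < ε) : ‖(1 + ε * w)⁻¹‖ * ‖w‖ ≤ 1 / ε := by
  have hv : 1 ≤ (1 + ε * w).re := by simp; positivity
  obtain ⟨h0, -, h2, h3⟩ := inv_aux hv
  have h4 : ‖1 - (1 + ε * w)⁻¹‖ ≤ 1 := by
    have : 0 ≤ ((1 + ε * w)⁻¹).re := (sq_nonneg _).trans h2
    nlinarith [norm_nonneg (1 - (1 + ε * w)⁻¹)]
  have e : (1 + ε * w)⁻¹ * w = (1 - (1 + ε * w)⁻¹) / ε := by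
    have : (ε : ℂ) ≠ 0 := by exact_mod_cast hε.ne'
    field_simp
    ring
  rw [← norm_mul, e, norm_div, Complex.norm_real, Real.norm_eq_abs, abs_of_pos hε]
  gcongr
end W

lemma L2_bound {U : ℂ → ℂ} (hU : DifferentiableOn ℂ U (ball 0 1))
    (h : ∀ w ∈ ball (0:ℂ) 1, ‖1 - U w‖ ^ 2 ≤ 1 - (U w).re) {r : ℝ} (h0 : 0 < r) (h1 : r < 1) :
    ∫ t in (0:ℝ)..(2 * π), ‖1 - U (r * Complex.exp (t * I))‖ ^ 2 ≤ 2 * π * (1 - (U 0).re) := by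
  have hc := circ_cont hU.continuousOn h0 h1
  have h2 : ∫ t in (0:ℝ)..(2 * π), ‖1 - U (r * Complex.exp (t * I))‖ ^ 2 ≤
      ∫ t in (0:ℝ)..(2 * π), (1 - (U (r * Complex.exp (t * I))).re) := by
    refine intervalIntegral.integral_mono_on Real.two_pi_pos.le
      (((continuous_const.sub hc).norm.pow 2).intervalIntegrable _ _)
      ((continuous_const.sub (Complex.continuous_re.comp hc)).intervalIntegrable _ _) ?_
    intro t _
    exact h _ (circ_mem' h0 h1 t)
  refine h2.trans (le_of_eq ?_)
  have h3 := mean_value hU h0 h1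
  have hci : IntervalIntegrable (fun t : ℝ => (U (r * Complex.exp (t * I))).re) volume
      0 (2 * π) := (Complex.continuous_re.comp hc).intervalIntegrable _ _
  rw [intervalIntegral.integral_sub (by simp) hci]
  have h4 : ∫ t in (0:ℝ)..(2 * π), (U (r * Complex.exp (t * I))).re = 2 * π * (U 0).re := by
    have := Complex.reCLM.intervalIntegral_comp_comm
      (hc.intervalIntegrable (μ := volume) 0 (2 * π))
    simp only [Complex.reCLM_apply] at this
    rw [this, h3]
    have e : (2 * (π:ℂ) * U 0) = ((2 * π : ℝ) : ℂ) * U 0 := by push_cast; ring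
    rw [e, Complex.re_ofReal_mul]
  rw [h4]
  simp
  ring



/-- smoothing factor -/
def WW (n : ℕ) (G : ℂ → ℂ) (z : ℂ) : ℂ := (1 + (((1 / ((n : ℝ) + 1) : ℝ)) : ℂ) * G z)⁻¹

/-- product of the smoothing factors -/
def QQ (n : ℕ) (Gs : Fin 4 → ℂ → ℂ) (z : ℂ) : ℂ := ∏ k, WW n (Gs k) z

lemma eps_pos (n : ℕ) : 0 < 1 / ((n : ℝ) + 1) := by positivity

lemma WW_re {G : ℂ → ℂ} {z : ℂ} (h : 0 ≤ (G z).re) (n : ℕ) :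
    1 ≤ (1 + (((1 / ((n : ℝ) + 1) : ℝ)) : ℂ) * G z).re := by
  rw [Complex.add_re, Complex.one_re, Complex.re_ofReal_mul]
  have := eps_pos n
  nlinarith [mul_nonneg this.le h]

lemma WW_le {G : ℂ → ℂ} {z : ℂ} (h : 0 ≤ (G z).re) (n : ℕ) : ‖WW n G z‖ ≤ 1 :=
  (inv_aux (WW_re h n)).2.1

lemma WW_mul {G : ℂ → ℂ} {z : ℂ} (h : 0 ≤ (G z).re) (n : ℕ) :
    ‖WW n G z‖ * ‖G z‖ ≤ n + 1 := by
  have := inv_aux2 h (eps_pos n)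
  rwa [one_div_one_div] at this

lemma WW_diff {G : ℂ → ℂ} (hd : DifferentiableOn ℂ G (ball 0 1))
    (h : ∀ z ∈ ball (0:ℂ) 1, 0 ≤ (G z).re) (n : ℕ) : DifferentiableOn ℂ (WW n G) (ball 0 1) := by
  unfold WW
  refine DifferentiableOn.inv ((hd.const_mul _).const_add _) ?_
  intro z hz
  exact (inv_aux (WW_re (h z hz) n)).1

lemma WW_lim (G : ℂ → ℂ) (z : ℂ) : Tendsto (fun n => WW n G z) atTop (𝓝 1) := by
  have h1 : Tendsto (fun n : ℕ => (1 / ((n : ℝ) + 1) : ℝ)) atTop (𝓝 0) :=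
    tendsto_one_div_add_atTop_nhds_zero_nat
  have h2 := (Complex.continuous_ofReal.tendsto 0).comp h1
  have h3 := ((h2.mul_const (G z)).const_add 1).inv₀ (by simp)
  simpa [WW, Function.comp_def] using h3

lemma QQ_le {Gs : Fin 4 → ℂ → ℂ} {z : ℂ} (h : ∀ k, 0 ≤ (Gs k z).re) (n : ℕ) :
    ‖QQ n Gs z‖ ≤ 1 := by
  unfold QQ
  rw [norm_prod]
  exact Finset.prod_le_one (fun _ _ => norm_nonneg _) (fun k _ => WW_le (h k) n)

lemma QQ_mul {Gs : Fin 4 → ℂ → ℂ} {z : ℂ} (h : ∀ k, 0 ≤ (Gs k z).re) (n : ℕ) (k : Fin 4) :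
    ‖QQ n Gs z‖ * ‖Gs k z‖ ≤ n + 1 := by
  refine le_trans ?_ (WW_mul (h k) n)
  refine mul_le_mul_of_nonneg_right ?_ (norm_nonneg _)
  unfold QQ
  rw [norm_prod, ← Finset.mul_prod_erase _ _ (Finset.mem_univ k)]
  exact mul_le_of_le_one_right (norm_nonneg _)
    (Finset.prod_le_one (fun _ _ => norm_nonneg _) (fun k _ => WW_le (h k) n))

lemma QQ_sum {Gs : Fin 4 → ℂ → ℂ} {z : ℂ} (h : ∀ k, 0 ≤ (Gs k z).re) (n : ℕ) (c : Fin 4 → ℂ)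
    (hc : ∀ k, ‖c k‖ ≤ 1) {Gz : ℂ} (hG : Gz = ∑ k, c k * Gs k z) :
    ‖QQ n Gs z * Gz‖ ≤ 4 * (n + 1) := by
  rw [hG, Finset.mul_sum]
  refine (norm_sum_le _ _).trans ?_
  have : ∀ k ∈ (Finset.univ : Finset (Fin 4)), ‖QQ n Gs z * (c k * Gs k z)‖ ≤ (n:ℝ) + 1 := by
    intro k _
    rw [norm_mul, norm_mul, ← mul_assoc, mul_comm ‖QQ n Gs z‖, mul_assoc]
    exact (mul_le_of_le_one_left (by positivity) (hc k)).trans (QQ_mul h n k)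
  refine (Finset.sum_le_sum this).trans (le_of_eq ?_)
  simp
  ring

lemma QQ_diff {Gs : Fin 4 → ℂ → ℂ} (hd : ∀ k, DifferentiableOn ℂ (Gs k) (ball 0 1))
    (h : ∀ k, ∀ z ∈ ball (0:ℂ) 1, 0 ≤ (Gs k z).re) (n : ℕ) :
    DifferentiableOn ℂ (QQ n Gs) (ball 0 1) := by
  unfold QQ
  exact DifferentiableOn.fun_finsetProd fun k _ => WW_diff (hd k) (h k) n

lemma pos_rep {G : ℂ → ℂ} {Gs : Fin 4 → ℂ → ℂ} {c : Fin 4 → ℂ} {g : ℝ → ℂ}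
    (hd : ∀ k, DifferentiableOn ℂ (Gs k) (ball 0 1))
    (hpos : ∀ k, ∀ z ∈ ball (0:ℂ) 1, 0 ≤ (Gs k z).re) (hc : ∀ k, ‖c k‖ ≤ 1)
    (hG : ∀ z ∈ ball (0:ℂ) 1, G z = ∑ k, c k * Gs k z)
    (hg : IntervalIntegrable g volume 0 (2 * π))
    (hlim : ∀ᵐ t : ℝ, t ∈ Ioc (0:ℝ) (2 * π) →
      Tendsto (fun r : ℝ => G (r * Complex.exp (t * I))) (𝓝[<] 1) (𝓝 (g t)))
    {z : ℂ} (hz : ‖z‖ < 1) : G z = poissonIntR g z := by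
  have hpi := Real.two_pi_pos.le
  have hzb : z ∈ ball (0:ℂ) 1 := by simpa using hz
  have hGd : DifferentiableOn ℂ G (ball 0 1) := by
    refine DifferentiableOn.congr (f := fun z => ∑ k, c k * Gs k z) ?_ hG
    exact DifferentiableOn.fun_sum fun k _ => (hd k).const_mul _
  have hQd := fun n => QQ_diff hd hpos n
  have hgm : AEStronglyMeasurable g (volume.restrict (Ioc (0:ℝ) (2 * π))) :=
    ((intervalIntegrable_iff_integrableOn_Ioc_of_le hpi).1 hg).aestronglyMeasurable
  have hev : ∀ᶠ r in 𝓝[<] (1:ℝ), 0 < r ∧ r < 1 := by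
    filter_upwards [self_mem_nhdsWithin,
      (eventually_gt_nhds one_pos).filter_mono nhdsWithin_le_nhds] with r h1 h2
    exact ⟨h2, h1⟩
  -- step 1
  have step1 : ∀ n, Tendsto (fun r : ℝ => poissonIntR (fun t =>
      QQ n Gs (r * Complex.exp (t * I)) * (G (r * Complex.exp (t * I)) - g t)) z)
      (𝓝[<] 1) (𝓝 0) := by
    intro n
    have h0 : poissonIntR (fun _ => 0) z = 0 := by simp [poissonIntR]
    rw [← h0]
    refine poissonIntR_dct hz (b := fun t => 4 * (n + 1) + ‖g t‖) ?_ ?_ ?_ ?_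
    · filter_upwards [hev] with r hr
      exact (circ_cont (hQd n).continuousOn hr.1 hr.2).aestronglyMeasurable.mul
        ((circ_cont hGd.continuousOn hr.1 hr.2).aestronglyMeasurable.sub hgm)
    · exact (intervalIntegrable_const).add hg.norm
    · filter_upwards [hev] with r hr
      refine Eventually.of_forall fun t _ => ?_
      have hm := circ_mem' hr.1 hr.2 t
      rw [mul_sub]
      refine (norm_sub_le _ _).trans (add_le_add (QQ_sum (fun k => hpos k _ hm) n c hc (hG _ hm)) ?_)
      rw [norm_mul]
      exact mul_le_of_le_one_left (norm_nonneg _) (QQ_le (fun k => hpos k _ hm) n)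
    · filter_upwards [hlim] with t ht hti
      have h1 := (tendsto_iff_norm_sub_tendsto_zero.1 (ht hti))
      refine squeeze_zero_norm' ?_ h1
      filter_upwards [hev] with r hr
      have hm := circ_mem' hr.1 hr.2 t
      rw [norm_mul]
      exact mul_le_of_le_one_left (norm_nonneg _) (QQ_le (fun k => hpos k _ hm) n)
  have step2 : ∀ n, Tendsto (fun r : ℝ => QQ n Gs (r * z) * G (r * z)) (𝓝[<] 1)
      (𝓝 (QQ n Gs z * G z)) := by
    intro n
    have hca : ContinuousAt (fun w => QQ n Gs w * G w) z :=
      (((hQd n).mul hGd).continuousOn).continuousAt (isOpen_ball.mem_nhds hzb)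
    have h1 : Tendsto (fun r : ℝ => (r : ℂ) * z) (𝓝[<] 1) (𝓝 z) := by
      have : Tendsto (fun r : ℝ => (r : ℂ) * z) (𝓝 1) (𝓝 (((1:ℝ):ℂ) * z)) :=
        Continuous.tendsto (by fun_prop) 1
      simp only [Complex.ofReal_one, one_mul] at this
      exact this.mono_left nhdsWithin_le_nhds
    exact hca.tendsto.comp h1
  have step3 : ∀ n : ℕ, ∃ r : ℝ, 0 < r ∧ r < 1 ∧
      ‖QQ n Gs z * G z - poissonIntR (fun t => QQ n Gs (r * Complex.exp (t * I)) * g t) z‖ <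
        1 / ((n:ℝ) + 1) := by
    intro n
    have h1 := (step2 n).sub (step1 n)
    rw [sub_zero] at h1
    have h2 := (Metric.tendsto_nhds.1 h1) _ (eps_pos n)
    obtain ⟨r, hr, hr'⟩ := (h2.and hev).exists
    refine ⟨r, hr'.1, hr'.2, ?_⟩
    have hf := poisson_formula ((hQd n).mul hGd) hr'.1 hr'.2 hz
    simp only [Pi.mul_apply] at hf
    have hQc := circ_cont (hQd n).continuousOn hr'.1 hr'.2
    have hGc := circ_cont hGd.continuousOn hr'.1 hr'.2
    have hQg : IntervalIntegrable (fun t : ℝ => QQ n Gs (r * Complex.exp (t * I)) * g t)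
      volume 0 (2 * π) := hg.continuousOn_mul hQc.continuousOn
    have hQG : IntervalIntegrable (fun t : ℝ => QQ n Gs (r * Complex.exp (t * I)) *
      (G (r * Complex.exp (t * I)) - g t)) volume 0 (2 * π) :=
      ((hGc.intervalIntegrable _ _).sub hg).continuousOn_mul hQc.continuousOn
    have ha := poissonIntR_add hz hQG hQg
    have e : (fun t : ℝ => QQ n Gs (r * Complex.exp (t * I)) * (G (r * Complex.exp (t * I)) - g t) +
        QQ n Gs (r * Complex.exp (t * I)) * g t) =
        fun t : ℝ => QQ n Gs (r * Complex.exp (t * I)) * G (r * Complex.exp (t * I)) := by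
      ext t; ring
    rw [e, ← hf] at ha
    rw [ha, dist_comm, dist_eq_norm] at hr
    rwa [add_sub_cancel_left] at hr
  choose r hr0 hr1 hr using step3
  -- step 4: a.e. convergence
  set S : ℕ → ℝ → ℝ := fun n t => ∑ k, ‖1 - WW n (Gs k) (r n * Complex.exp (t * I))‖ ^ 2 with hS
  have hWc : ∀ n k, Continuous fun t : ℝ => WW n (Gs k) (r n * Complex.exp (t * I)) :=
    fun n k => circ_cont (WW_diff (hd k) (hpos k) n).continuousOn (hr0 n) (hr1 n)
  have hSc : ∀ n, Continuous (S n) := fun n =>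
    continuous_finsetSum _ fun k _ => (continuous_const.sub (hWc n k)).norm.pow 2
  have hS0 : ∀ n t, 0 ≤ S n t := fun n t => Finset.sum_nonneg fun k _ => by positivity
  have hSI : ∀ n, ∫ t in (0:ℝ)..(2 * π), S n t ≤ ∑ k, 2 * π * (1 - (WW n (Gs k) 0).re) := by
    intro n
    rw [hS, intervalIntegral.integral_finsetSum]
    · refine Finset.sum_le_sum fun k _ => ?_
      refine L2_bound (WW_diff (hd k) (hpos k) n) ?_ (hr0 n) (hr1 n)
      intro w hw
      exact (inv_aux (WW_re (hpos k w hw) n)).2.2.2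
    · intro k _
      exact ((continuous_const.sub (hWc n k)).norm.pow 2).intervalIntegrable _ _
  have hSlim : Tendsto (fun n => ∫ t in (0:ℝ)..(2 * π), S n t) atTop (𝓝 0) := by
    have h1 : Tendsto (fun n => ∑ k, 2 * π * (1 - (WW n (Gs k) 0).re)) atTop
        (𝓝 (∑ k : Fin 4, 2 * π * (1 - (1:ℂ).re))) :=
      tendsto_finsetSum _ fun k _ =>
        (((Complex.continuous_re.tendsto 1).comp (WW_lim (Gs k) 0)).const_sub 1).const_mul _
    simp only [Complex.one_re, sub_self, mul_zero, Finset.sum_const_zero] at h1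
    exact squeeze_zero (fun n => intervalIntegral.integral_nonneg hpi fun t _ => hS0 n t) hSI h1
  set μ := volume.restrict (Ioc (0:ℝ) (2 * π)) with hμ
  have hmeas : TendstoInMeasure μ S atTop (fun _ => 0) := by
    refine tendstoInMeasure_of_tendsto_eLpNorm (p := 1) one_ne_zero
      (fun n => (hSc n).aestronglyMeasurable) aestronglyMeasurable_const ?_
    have : ∀ n, eLpNorm (S n - fun _ => 0) 1 μ = ENNReal.ofReal (∫ t in (0:ℝ)..(2 * π), S n t) := by
      intro n
      have e : (S n - fun _ => (0:ℝ)) = S n := by ext; simp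
      rw [e, eLpNorm_one_eq_lintegral_enorm, ← ofReal_integral_norm_eq_lintegral_enorm,
        intervalIntegral.integral_of_le hpi]
      · congr 2
        ext t
        rw [Real.norm_eq_abs, abs_of_nonneg (hS0 n t)]
      · exact (intervalIntegrable_iff_integrableOn_Ioc_of_le hpi).1
          ((hSc n).intervalIntegrable _ _)
    simp_rw [this]
    have := (ENNReal.continuous_ofReal.tendsto 0).comp hSlim
    simpa [Function.comp_def] using this
  obtain ⟨ns, hns, hae⟩ := hmeas.exists_seq_tendsto_ae
  have hnt := hns.tendsto_atTop
  have hPg : Tendsto (fun i => poissonIntR (fun t =>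
      QQ (ns i) Gs (r (ns i) * Complex.exp (t * I)) * g t) z) atTop (𝓝 (poissonIntR g z)) := by
    refine poissonIntR_dct hz (b := fun t => ‖g t‖) ?_ hg.norm ?_ ?_
    · exact Eventually.of_forall fun i =>
        (circ_cont (hQd _).continuousOn (hr0 _) (hr1 _)).aestronglyMeasurable.mul hgm
    · refine Eventually.of_forall fun i => Eventually.of_forall fun t _ => ?_
      have hm := circ_mem' (hr0 (ns i)) (hr1 (ns i)) t
      rw [norm_mul]
      exact mul_le_of_le_one_left (norm_nonneg _) (QQ_le (fun k => hpos k _ hm) _)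
    · rw [hμ, ae_restrict_iff' measurableSet_Ioc] at hae
      filter_upwards [hae] with t ht hti
      have ht := ht hti
      have hW : ∀ k, Tendsto (fun i => WW (ns i) (Gs k) (r (ns i) * Complex.exp (t * I))) atTop
          (𝓝 1) := by
        intro k
        rw [tendsto_iff_norm_sub_tendsto_zero]
        have h2 : Tendsto (fun i => ‖1 - WW (ns i) (Gs k) (r (ns i) * Complex.exp (t * I))‖ ^ 2)
            atTop (𝓝 0) := by
          refine squeeze_zero (fun i => by positivity) (fun i => ?_) ht
          exact Finset.single_le_sum (f := fun k =>
            ‖1 - WW (ns i) (Gs k) (r (ns i) * Complex.exp (t * I))‖ ^ 2)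
            (fun k _ => by positivity) (Finset.mem_univ k)
        have h3 := h2.sqrt
        simp only [Real.sqrt_zero] at h3
        refine h3.congr fun i => ?_
        rw [Real.sqrt_sq (norm_nonneg _), norm_sub_rev]
      have hQ : Tendsto (fun i => QQ (ns i) Gs (r (ns i) * Complex.exp (t * I))) atTop (𝓝 1) := by
        have := tendsto_finsetProd (Finset.univ : Finset (Fin 4)) fun k _ => hW k
        simpa [QQ] using this
      simpa using hQ.mul_const (g t)
  have hQz : Tendsto (fun i => QQ (ns i) Gs z * G z) atTop (𝓝 (G z)) := by
    have := tendsto_finsetProd (Finset.univ : Finset (Fin 4)) fun k _ => (WW_lim (Gs k) z).comp hnt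
    have h2 : Tendsto (fun i => QQ (ns i) Gs z) atTop (𝓝 1) := by simpa [QQ] using this
    simpa using h2.mul_const (G z)
  have hdiff : Tendsto (fun i => QQ (ns i) Gs z * G z - poissonIntR (fun t =>
      QQ (ns i) Gs (r (ns i) * Complex.exp (t * I)) * g t) z) atTop (𝓝 0) := by
    have h1 : Tendsto (fun n : ℕ => (1 / ((n : ℝ) + 1) : ℝ)) atTop (𝓝 0) :=
      tendsto_one_div_add_atTop_nhds_zero_nat
    exact squeeze_zero_norm (fun i => (hr (ns i)).le) (h1.comp hnt)
  have := tendsto_nhds_unique hdiff (hQz.sub hPg)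
  exact (sub_eq_zero.1 this.symm)



lemma kkI {z : ℂ} (hz : ‖z‖ < 1) {g : ℝ → ℂ} (hg : IntervalIntegrable g volume 0 (2 * π)) :
    IntervalIntegrable (fun t => kk (z * ee t) * g t) volume 0 (2 * π) :=
  hg.continuousOn_mul (kk_ee_cont hz).continuousOn

lemma herg_re_nonneg {u : ℝ → ℝ} (hu : ∀ t, 0 ≤ u t)
    (hi : IntervalIntegrable u volume 0 (2 * π)) {z : ℂ} (hz : ‖z‖ < 1) :
    0 ≤ (herg (fun t => (u t : ℂ)) z).re := by
  unfold herg
  have hi' : IntervalIntegrable (fun t => (u t : ℂ)) volume 0 (2 * π) :=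
    ⟨Integrable.ofReal hi.1, Integrable.ofReal hi.2⟩
  have e : (1 / (2 * π) : ℂ) = ((1 / (2 * π) : ℝ) : ℂ) := by push_cast; ring
  rw [e, Complex.re_ofReal_mul]
  have := Complex.reCLM.intervalIntegral_comp_comm (kkI hz hi')
  simp only [Complex.reCLM_apply] at this
  rw [← this]
  refine mul_nonneg (by positivity) (intervalIntegral.integral_nonneg Real.two_pi_pos.le ?_)
  intro t _
  rw [Complex.re_mul_ofReal]
  exact mul_nonneg (kk_re_pos (by rwa [norm_mul_ee])) (hu t)

lemma herg_sum {φs : Fin 4 → ℝ → ℂ} {c : Fin 4 → ℂ}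
    (hi : ∀ k, IntervalIntegrable (φs k) volume 0 (2 * π)) {z : ℂ} (hz : ‖z‖ < 1) :
    herg (fun t => ∑ k, c k * φs k t) z = ∑ k, c k * herg (φs k) z := by
  unfold herg
  have : ∀ t, kk (z * ee t) * ∑ k, c k * φs k t = ∑ k, c k * (kk (z * ee t) * φs k t) := by
    intro t
    rw [Finset.mul_sum]
    exact Finset.sum_congr rfl fun k _ => by ring
  simp_rw [this]
  rw [intervalIntegral.integral_finsetSum fun k _ => (kkI hz (hi k)).const_mul _, Finset.mul_sum]
  refine Finset.sum_congr rfl fun k _ => ?_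
  rw [intervalIntegral.integral_const_mul]
  ring

/-- the four positive parts -/
def parts (φ : ℝ → ℂ) : Fin 4 → ℝ → ℝ :=
  ![fun t => max (φ t).re 0, fun t => max (-(φ t).re) 0,
    fun t => max (φ t).im 0, fun t => max (-(φ t).im) 0]

lemma parts_nonneg (φ : ℝ → ℂ) (k : Fin 4) (t : ℝ) : 0 ≤ parts φ k t := by
  fin_cases k <;> exact le_max_right _ _

lemma parts_int {φ : ℝ → ℂ} (h : IntervalIntegrable φ volume 0 (2 * π)) (k : Fin 4) :
    IntervalIntegrable (parts φ k) volume 0 (2 * π) := by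
  rw [intervalIntegrable_iff] at *
  have h1 : IntegrableOn (fun t => (φ t).re) (uIoc 0 (2 * π)) := Integrable.re h
  have h2 : IntegrableOn (fun t => (φ t).im) (uIoc 0 (2 * π)) := Integrable.im h
  fin_cases k
  · exact Integrable.pos_part h1
  · exact Integrable.neg_part h1
  · exact Integrable.pos_part h2
  · exact Integrable.neg_part h2

lemma max_sub (x : ℝ) : max x 0 - max (-x) 0 = x := max_zero_sub_max_neg_zero_eq_self x

lemma parts_sum (φ : ℝ → ℂ) (t : ℝ) :
    φ t = ∑ k, (![1, -1, I, -I] : Fin 4 → ℂ) k * (parts φ k t : ℂ) := by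
  rw [Fin.sum_univ_four]
  simp only [parts, Matrix.cons_val]
  apply Complex.ext
  · have := max_sub (φ t).re
    simp
    linarith
  · have := max_sub (φ t).im
    simp
    linarith

lemma radial_ae {φ : ℝ → ℂ} {HF : ℝ → ℂ} (hp : Function.Periodic φ (2 * π))
    (hi : ∀ a b, IntervalIntegrable φ volume a b)
    (hHF : ∀ᵐ θ : ℝ, IsPVHilbert φ θ (HF θ)) :
    ∀ᵐ θ : ℝ, Tendsto (fun r : ℝ => herg φ (r * Complex.exp (θ * I))) (𝓝[<] 1)
      (𝓝 (φ θ + I * HF θ)) := by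
  have hloc : LocallyIntegrable φ := by
    intro x
    refine ⟨Ioc (x - 1) (x + 1), Ioc_mem_nhds (by linarith) (by linarith), ?_⟩
    exact (intervalIntegrable_iff_integrableOn_Ioc_of_le (by linarith)).1 (hi _ _)
  have hleb := IsUnifLocDoublingMeasure.ae_tendsto_average_norm_sub volume hloc 1
  filter_upwards [hHF, hleb] with θ h1 h2
  refine radial_lim hp hloc ?_ h1
  refine h2 (fun _ => θ) id tendsto_id ?_
  filter_upwards [self_mem_nhdsWithin] with δ hδ
  have : (0:ℝ) < δ := hδ
  simp [this.le]

lemma herg_rep {φ : ℝ → ℂ} {HF : ℝ → ℂ} (hp : Function.Periodic φ (2 * π))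
    (hi : ∀ a b, IntervalIntegrable φ volume a b)
    (hHF : ∀ᵐ θ : ℝ, IsPVHilbert φ θ (HF θ))
    (hH : IntervalIntegrable HF volume 0 (2 * π)) {z : ℂ} (hz : ‖z‖ < 1) :
    herg φ z = poissonIntR (fun t => φ t + I * HF t) z := by
  have hpi := hi 0 (2 * π)
  have hk : ∀ k, IntervalIntegrable (fun t => (parts φ k t : ℂ)) volume 0 (2 * π) :=
    fun k => ⟨Integrable.ofReal (parts_int hpi k).1, Integrable.ofReal (parts_int hpi k).2⟩
  refine pos_rep (Gs := fun k => herg (fun t => (parts φ k t : ℂ))) (c := ![1, -1, I, -I])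
    (fun k => herg_diffOn (hk k)) ?_ ?_ ?_ (hpi.add (hH.const_mul I)) ?_ hz
  · intro k w hw
    exact herg_re_nonneg (parts_nonneg φ k) (parts_int hpi k) (by simpa using hw)
  · intro k
    fin_cases k <;> simp
  · intro w hw
    rw [← herg_sum hk (by simpa using hw)]
    congr 1
    ext t
    exact parts_sum φ t
  · filter_upwards [radial_ae hp hi hHF] with t ht _
    exact ht

lemma pk_integral {r : ℝ} (h0 : 0 < r) (h1 : r < 1) (t : ℝ) :
    ∫ θ in (0:ℝ)..(2 * π), poissonKer (r * Complex.exp (θ * I) * Complex.exp (-(t : ℂ) * I)) =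
      2 * π := by
  have hd : DifferentiableOn ℂ (fun w => kk (w * ee t)) (ball 0 1) := by
    intro w hw
    have : DifferentiableAt ℂ kk (w * ee t) := (kk_hasDerivAt (by
      rw [norm_mul_ee]; simpa using hw)).differentiableAt
    exact (DifferentiableAt.comp (f := fun w => w * ee t) w this
      (by fun_prop)).differentiableWithinAt
  have hm := mean_value hd h0 h1
  have hc := circ_cont hd.continuousOn h0 h1
  have := Complex.reCLM.intervalIntegral_comp_comm (hc.intervalIntegrable (μ := volume) 0 (2 * π))
  simp only [Complex.reCLM_apply] at this
  rw [hm] at this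
  simp only [poissonKer_eq_s1]
  change ∫ θ in (0:ℝ)..(2 * π), (kk (r * Complex.exp (θ * I) * ee t)).re = _
  rw [this]
  have : kk 0 = 1 := by simp [kk]
  rw [zero_mul, this]
  simp

lemma circ_norm {r : ℝ} (h0 : 0 < r) (t : ℝ) : ‖(r : ℂ) * Complex.exp (t * I)‖ = r := by
  rw [norm_mul, Complex.norm_exp_ofReal_mul_I, Complex.norm_real, Real.norm_eq_abs, abs_of_pos h0,
    mul_one]

lemma poisson_L1 {g : ℝ → ℂ} (hg : IntervalIntegrable g volume 0 (2 * π)) {r : ℝ} (h0 : 0 < r)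
    (h1 : r < 1) (hc : Continuous fun θ : ℝ => poissonIntR g (r * Complex.exp (θ * I))) :
    ∫ θ in (0:ℝ)..(2 * π), ‖poissonIntR g (r * Complex.exp (θ * I))‖ ≤
      ∫ t in (0:ℝ)..(2 * π), ‖g t‖ := by
  have hpi := Real.two_pi_pos
  have hgi : IntegrableOn g (Ioc (0:ℝ) (2 * π)) :=
    (intervalIntegrable_iff_integrableOn_Ioc_of_le hpi.le).1 hg
  set μ := volume.restrict (Ioc (0:ℝ) (2 * π)) with hμ
  set K : ℝ → ℝ → ℝ := fun θ t =>
    poissonKer (r * Complex.exp (θ * I) * Complex.exp (-(t : ℂ) * I)) with hK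
  have hn : ∀ θ t : ℝ, ‖(r : ℂ) * Complex.exp (θ * I) * Complex.exp (-(t : ℂ) * I)‖ = r := by
    intro θ t
    have := norm_mul_ee ((r : ℂ) * Complex.exp (θ * I)) t
    rw [circ_norm h0] at this
    exact this
  have hK0 : ∀ θ t, 0 ≤ K θ t := by
    intro θ t
    rw [hK]
    simp only [poissonKer_eq_s1]
    exact kk_re_pos (by rw [hn]; exact h1)
  have hKb : ∀ θ t, K θ t ≤ 2 / (1 - r) := by
    intro θ t
    have := pk_bound (z := r * Complex.exp (θ * I)) (by rw [circ_norm h0]; exact h1) t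
    rw [circ_norm h0, Complex.norm_real] at this
    exact (le_abs_self _).trans this
  have hKm : Measurable (Function.uncurry K) := by
    simp only [hK, Function.uncurry_def, poissonKer]
    fun_prop
  have hint : Integrable (Function.uncurry fun θ t => K θ t * ‖g t‖) (μ.prod μ) := by
    have h2 : Integrable (fun p : ℝ × ℝ => ‖g p.2‖) (μ.prod μ) := Integrable.comp_snd (Integrable.norm hgi) μ
    refine Integrable.bdd_mul (c := 2 / (1 - r)) h2 hKm.aestronglyMeasurable ?_
    refine Eventually.of_forall fun p => ?_
    rw [Real.norm_eq_abs, abs_of_nonneg (hK0 _ _)]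
    exact hKb _ _
  have hsw := integral_integral_swap hint
  have hpt : ∀ θ : ℝ, ‖poissonIntR g (r * Complex.exp (θ * I))‖ ≤
      1 / (2 * π) * ∫ t, K θ t * ‖g t‖ ∂μ := by
    intro θ
    rw [poissonIntR, norm_mul, intervalIntegral.integral_of_le hpi.le]
    have e5 : ‖(1 / (2 * π) : ℂ)‖ = 1 / (2 * π) := by
      rw [norm_div, norm_mul, Complex.norm_real, Real.norm_eq_abs, abs_of_pos Real.pi_pos]; simp
    rw [e5]
    refine mul_le_mul_of_nonneg_left ?_ (by positivity)
    refine (norm_integral_le_integral_norm _).trans (le_of_eq ?_)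
    congr 1
    ext t
    rw [norm_mul, Complex.norm_real, Real.norm_eq_abs, abs_of_nonneg (hK0 θ t)]
  rw [intervalIntegral.integral_of_le hpi.le, intervalIntegral.integral_of_le hpi.le]
  calc ∫ θ, ‖poissonIntR g (r * Complex.exp (θ * I))‖ ∂μ
      ≤ ∫ θ, 1 / (2 * π) * ∫ t, K θ t * ‖g t‖ ∂μ ∂μ := by
        refine integral_mono ?_ (hint.integral_prod_left.const_mul _) hpt
        exact (intervalIntegrable_iff_integrableOn_Ioc_of_le hpi.le).1
          (hc.norm.intervalIntegrable _ _)
    _ = 1 / (2 * π) * ∫ t, ∫ θ, K θ t * ‖g t‖ ∂μ ∂μ := by rw [integral_const_mul, hsw]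
    _ = 1 / (2 * π) * ∫ t, (2 * π) * ‖g t‖ ∂μ := by
        congr 2
        ext t
        rw [integral_mul_const]
        congr 1
        have := pk_integral h0 h1 t
        rwa [intervalIntegral.integral_of_le hpi.le] at this
    _ = ∫ t, ‖g t‖ ∂μ := by
        rw [integral_const_mul, ← mul_assoc, one_div_mul_cancel hpi.ne', one_mul]



lemma Mp_one (g : ℂ → ℂ) (r : ℝ) : Mp 1 g r =
    (1 / (2 * π)) * ∫ θ in (0:ℝ)..(2 * π), ‖g ((r : ℂ) * Complex.exp ((θ : ℂ) * Complex.I))‖ := by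
  simp [Mp]

lemma memHp_of {D : ℂ → ℂ} {φ HF : ℝ → ℂ} (hD : DifferentiableOn ℂ D (ball 0 1))
    (hrel : ∀ z ∈ ball (0:ℂ) 1, 2 * I * z * D z = herg φ z)
    (hp : Function.Periodic φ (2 * π))
    (hi : ∀ a b, IntervalIntegrable φ volume a b)
    (hHF : ∀ᵐ θ : ℝ, IsPVHilbert φ θ (HF θ))
    (hH : IntervalIntegrable HF volume 0 (2 * π)) : MemHp 1 D := by
  have hpi := Real.two_pi_pos
  refine ⟨hD, ?_⟩
  have hcb : closedBall (0:ℂ) (1/2) ⊆ ball 0 1 := closedBall_subset_ball (by norm_num)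
  obtain ⟨B, hB⟩ := (isCompact_closedBall (0:ℂ) (1/2)).exists_bound_of_continuousOn
    (hD.continuousOn.mono hcb)
  set g : ℝ → ℂ := fun t => φ t + I * HF t with hg
  have hgi : IntervalIntegrable g volume 0 (2 * π) := (hi _ _).add (hH.const_mul I)
  refine ⟨max B ((1 / (2 * π)) * ∫ t in (0:ℝ)..(2 * π), ‖g t‖), ?_⟩
  rintro r ⟨h0, h1⟩
  rw [Mp_one]
  have hDc := circ_cont hD.continuousOn h0 h1
  rcases le_or_gt r (1/2) with hr | hr
  · refine le_max_of_le_left ?_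
    have h2 : ∫ θ in (0:ℝ)..(2 * π), ‖D ((r : ℂ) * Complex.exp ((θ : ℂ) * Complex.I))‖ ≤
        ∫ θ in (0:ℝ)..(2 * π), B := by
      refine intervalIntegral.integral_mono_on hpi.le (hDc.norm.intervalIntegrable _ _)
        intervalIntegrable_const ?_
      intro t _
      exact hB _ (by rw [mem_closedBall_zero_iff, circ_norm h0]; exact hr)
    rw [intervalIntegral.integral_const, smul_eq_mul, sub_zero] at h2
    calc _ ≤ 1 / (2 * π) * (2 * π * B) := mul_le_mul_of_nonneg_left h2 (by positivity)
      _ = B := by rw [← mul_assoc, one_div_mul_cancel hpi.ne', one_mul]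
  · refine le_max_of_le_right (mul_le_mul_of_nonneg_left ?_ (by positivity))
    have hrep : ∀ θ : ℝ, herg φ (r * Complex.exp (θ * I)) =
        poissonIntR g (r * Complex.exp (θ * I)) := fun θ =>
      herg_rep hp hi hHF hH (by rw [circ_norm h0]; exact h1)
    have hhc := circ_cont (herg_diffOn (hi 0 (2 * π))).continuousOn h0 h1
    have hL := poisson_L1 hgi h0 h1 (by simpa only [hrep] using hhc)
    refine le_trans ?_ hL
    simp only [← hrep]
    refine intervalIntegral.integral_mono_on hpi.le (hDc.norm.intervalIntegrable _ _)
        (hhc.norm.intervalIntegrable _ _) ?_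
    intro t _
    rw [← hrel _ (circ_mem' h0 h1 t), norm_mul, norm_mul, circ_norm h0]
    refine le_mul_of_one_le_left (norm_nonneg _) ?_
    simp
    linarith

lemma memL1_of {D : ℂ → ℂ} {φ HF : ℝ → ℂ} (hD : MemHp 1 D)
    (hrel : ∀ z ∈ ball (0:ℂ) 1, 2 * I * z * D z = herg φ z)
    (hp : Function.Periodic φ (2 * π))
    (hi : ∀ a b, IntervalIntegrable φ volume a b)
    (hHF : ∀ᵐ θ : ℝ, IsPVHilbert φ θ (HF θ)) : MemLpT 1 HF := by
  have hpi := Real.two_pi_pos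
  obtain ⟨hDd, M, hM⟩ := hD
  set μ := volume.restrict (Ioc (0:ℝ) (2 * π)) with hμ
  set r : ℕ → ℝ := fun n => 1 - 1 / ((n : ℝ) + 2) with hr
  have hr0 : ∀ n, 0 < r n := by
    intro n
    have : 1 / ((n : ℝ) + 2) < 1 := by
      rw [div_lt_one (by positivity)]
      have : (0:ℝ) ≤ n := Nat.cast_nonneg n
      linarith
    simp only [hr]; linarith
  have hr1 : ∀ n, r n < 1 := by
    intro n
    have : 0 < 1 / ((n : ℝ) + 2) := by positivity
    simp only [hr]; linarith
  have hrt : Tendsto r atTop (𝓝[<] 1) := by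
    refine tendsto_nhdsWithin_iff.2 ⟨?_, Eventually.of_forall hr1⟩
    have h1 : Tendsto (fun n : ℕ => (n:ℝ) + 2) atTop atTop :=
      tendsto_atTop_add_const_right _ _ tendsto_natCast_atTop_atTop
    have h2 := (h1.inv_tendsto_atTop).const_sub 1
    simpa [hr] using h2
  set h : ℕ → ℝ → ℂ := fun n t => herg φ (r n * Complex.exp (t * I)) with hh
  have hhc : ∀ n, Continuous (h n) := fun n =>
    circ_cont (herg_diffOn (hi 0 (2 * π))).continuousOn (hr0 n) (hr1 n)
  have hlim : ∀ᵐ t ∂μ, Tendsto (fun n => h n t) atTop (𝓝 (φ t + I * HF t)) := by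
    refine ae_restrict_of_ae ?_
    filter_upwards [radial_ae hp hi hHF] with t ht
    exact ht.comp hrt
  have hφm : MemLp φ 1 μ := memLp_one_iff_integrable.2
    ((intervalIntegrable_iff_integrableOn_Ioc_of_le hpi.le).1 (hi _ _))
  have hbd : ∀ n, eLpNorm (h n) 1 μ ≤ ENNReal.ofReal (2 * (2 * π * M)) := by
    intro n
    rw [eLpNorm_one_eq_lintegral_enorm, ← ofReal_integral_norm_eq_lintegral_enorm
      ((intervalIntegrable_iff_integrableOn_Ioc_of_le hpi.le).1 ((hhc n).intervalIntegrable _ _))]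
    refine ENNReal.ofReal_le_ofReal ?_
    have hm := hM (r n) ⟨hr0 n, hr1 n⟩
    rw [Mp_one, one_div, inv_mul_le_iff₀ hpi] at hm
    have hDc := circ_cont hDd.continuousOn (hr0 n) (hr1 n)
    rw [← intervalIntegral.integral_of_le hpi.le]
    refine le_trans ?_ (mul_le_mul_of_nonneg_left hm (by norm_num : (0:ℝ) ≤ 2))
    rw [← intervalIntegral.integral_const_mul]
    refine intervalIntegral.integral_mono_on hpi.le ((hhc n).norm.intervalIntegrable _ _)
      ((hDc.norm.intervalIntegrable _ _).const_mul _) ?_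
    intro t _
    simp only [hh]
    rw [← hrel _ (circ_mem' (hr0 n) (hr1 n) t), norm_mul, norm_mul, circ_norm (hr0 n)]
    refine mul_le_mul_of_nonneg_right ?_ (norm_nonneg _)
    simp
    linarith [hr1 n]
  have hG : MemLp (fun t => φ t + I * HF t) 1 μ := by
    refine ⟨aestronglyMeasurable_of_tendsto_ae atTop
      (fun n => (hhc n).aestronglyMeasurable) hlim, ?_⟩
    have h1 := Lp.eLpNorm_lim_le_liminf_eLpNorm (p := 1)
      (fun n => (hhc n).aestronglyMeasurable (μ := μ)) _ hlim
    refine (h1.trans ?_).trans_lt (ENNReal.ofReal_lt_top (r := 2 * (2 * π * M)))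
    exact liminf_le_of_frequently_le' (Frequently.of_forall hbd)
  have h2 := (hG.sub hφm).const_mul (-I)
  have e : (fun t => -I * ((fun t => φ t + I * HF t) - φ) t) = HF := by
    ext t
    simp only [Pi.sub_apply]
    linear_combination (-HF t) * Complex.I_mul_I
  rw [e] at h2
  exact h2

lemma pv_conj {φ : ℝ → ℂ} {θ : ℝ} {L : ℂ} (h : IsPVHilbert φ θ L) :
    IsPVHilbert (fun t => (starRingEnd ℂ) (φ t)) θ ((starRingEnd ℂ) L) := by
  unfold IsPVHilbert at *
  have := (Complex.continuous_conj.tendsto L).comp h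
  refine this.congr fun ε => ?_
  simp only [Function.comp]
  rw [map_mul, ← integral_conj]
  congr 1
  · simp [Complex.conj_ofNat]
  · congr 1
    ext t
    rw [map_div₀, Complex.conj_ofReal]

theorem stmt1_proof (F : ℂ → ℂ) (Fd HF : ℝ → ℂ)
    (hF : IsACDeriv F Fd)
    (hHF : ∀ᵐ θ : ℝ, IsPVHilbert Fd θ (HF θ)) :
    ((MemHp 1 (wdz (poissonInt F)) ∧
        MemHp 1 (fun z => (starRingEnd ℂ) (wdzb (poissonInt F) z))) ↔
      MemLpT 1 HF) ∧
    (MemLpT 1 HF →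
      ∀ z ∈ ball (0:ℂ) 1,
        2 * Complex.I * z * wdz (poissonInt F) z
          = poissonIntR (fun t => Fd t + Complex.I * HF t) z) := by
  obtain ⟨hi, hp, hac⟩ := hF
  have hpi := Real.two_pi_pos
  have h0 : ∫ s in (0:ℝ)..(2 * π), Fd s = 0 := by
    have h := hac (2 * π)
    have e : ((2 * π : ℝ) : ℂ) * I = 2 * π * I := by push_cast; ring
    rw [e, Complex.exp_two_pi_mul_I] at h
    simpa using h
  set Φ : ℝ → ℂ := fun t => F (Complex.exp (t * I)) with hΦ
  have hΦc : Continuous Φ := by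
    have e : Φ = fun t => F 1 + ∫ s in (0:ℝ)..t, Fd s := funext hac
    rw [e]
    exact continuous_const.add (intervalIntegral.continuous_primitive hi 0)
  have hΦi : IntervalIntegrable Φ volume 0 (2 * π) := hΦc.intervalIntegrable _ _
  have hwd : ∀ z ∈ ball (0:ℂ) 1, _ := fun z hz => herg_wd (F := F) (Φ := Φ) (fun _ => rfl) hΦi hz
  set Fc : ℝ → ℂ := fun t => (starRingEnd ℂ) (Fd t) with hFc
  have hic : ∀ a b, IntervalIntegrable Fc volume a b := fun a b => conj_intervalIntegrable (hi a b)
  have hpc : Function.Periodic Fc (2 * π) := fun t => by simp only [hFc, hp t]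
  have hacc : ∀ t, (starRingEnd ℂ) (Φ t) = (starRingEnd ℂ) (F 1) + ∫ s in (0:ℝ)..t, Fc s := by
    intro t
    have := hac t
    simp only [hΦ]
    rw [this, map_add, conj_intervalIntegral]
  have h0c : ∫ s in (0:ℝ)..(2 * π), Fc s = 0 := by
    rw [hFc, ← conj_intervalIntegral, h0, map_zero]
  have hΦci : IntervalIntegrable (fun t => (starRingEnd ℂ) (Φ t)) volume 0 (2 * π) :=
    conj_intervalIntegrable hΦi
  have hrel1 : ∀ z ∈ ball (0:ℂ) 1, 2 * I * z * wdz (poissonInt F) z = herg Fd z := by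
    intro z hz
    rw [(hwd z hz).1, ← herg_ibp (hi _ _) hac h0 (by simpa using hz)]
    ring
  have hrel2 : ∀ z ∈ ball (0:ℂ) 1,
      2 * I * z * (starRingEnd ℂ) (wdzb (poissonInt F) z) = herg Fc z := by
    intro z hz
    rw [(hwd z hz).2, ← herg_ibp (hic _ _) hacc h0c (by simpa using hz)]
    ring
  have hd1 : DifferentiableOn ℂ (wdz (poissonInt F)) (ball 0 1) :=
    (((herg_diffOn hΦi).deriv isOpen_ball).const_mul (1 / 2)).congr fun z hz => (hwd z hz).1
  have hd2 : DifferentiableOn ℂ (fun z => (starRingEnd ℂ) (wdzb (poissonInt F) z)) (ball 0 1) :=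
    (((herg_diffOn hΦci).deriv isOpen_ball).const_mul (1 / 2)).congr fun z hz => (hwd z hz).2
  have hpvc : ∀ᵐ θ : ℝ, IsPVHilbert Fc θ ((starRingEnd ℂ) (HF θ)) := by
    filter_upwards [hHF] with θ h using pv_conj h
  have hHi : MemLpT 1 HF → IntervalIntegrable HF volume 0 (2 * π) := fun h =>
    (intervalIntegrable_iff_integrableOn_Ioc_of_le hpi.le).2 (memLp_one_iff_integrable.1 h)
  refine ⟨⟨fun h => memL1_of h.1 hrel1 hp hi hHF, fun h => ⟨?_, ?_⟩⟩, fun h z hz => ?_⟩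
  · exact memHp_of hd1 hrel1 hp hi hHF (hHi h)
  · exact memHp_of hd2 hrel2 hpc hic hpvc (conj_intervalIntegrable (hHi h))
  · rw [hrel1 z hz]
    exact herg_rep hp hi hHF (hHi h) (by simpa using hz)


/-- For `F : 𝕋 → ℂ` absolutely continuous with `Ḟ ∈ L¹(𝕋)` and
`f = P[F]`: `f_z` and `conj (f_z̄)` lie in `H¹(𝔻)` iff the Hilbert transform `H(Ḟ)`
lies in `L¹(𝕋)`, and in that case `2 i z f_z(z) = P[Ḟ + i H(Ḟ)](z)` on `𝔻`. -/
theorem stmt1 (F : ℂ → ℂ) (Fd HF : ℝ → ℂ)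
    (hF : IsACDeriv F Fd) (hL1 : MemLpT 1 Fd)
    (hHF : ∀ᵐ θ : ℝ, IsPVHilbert Fd θ (HF θ)) :
    ((MemHp 1 (wdz (poissonInt F)) ∧
        MemHp 1 (fun z => (starRingEnd ℂ) (wdzb (poissonInt F) z))) ↔
      MemLpT 1 HF) ∧
    (MemLpT 1 HF →
      ∀ z ∈ ball (0:ℂ) 1,
        2 * Complex.I * z * wdz (poissonInt F) z
          = poissonIntR (fun t => Fd t + Complex.I * HF t) z) := by
  exact stmt1_proof F Fd HF hF hHF

end
end
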